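/- Uniform pointwise decay (Remark 4). Let N ≥ 2 and q > 0. Then there exist s > 0 and an integer k ≥ 0 (depending on N and q) such that: if f_in ≥ 0 belongs to the Schwartz class S(ℝ^N) and f is a solution of the spatially homogeneous Boltzmann equation with collision kernel satisfying (H1)-(H2)-(H3) and initial datum f_in, and if sup_{t≥0} ‖f(t,·)‖_{L¹_s} < ∞ and sup_{t≥0} ‖f(t,·)‖_{H^k} < ∞, then there is a constant C > 0 such that f(t,v) ≤ C (1+|v|)^{−q} for all t ≥ 0 and all v ∈ ℝ^N. -/

import Mathlib

/-! The decay follows from a barrier argument with barrier `K (1+|v|)^{-q}`, `K = κ²`, using only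
a bounded moment of order `4 (q + 2)` and a bounded `L²` norm (so `s = 4 (q + 2)`, `k = 0`).

Positive mass and a bounded second moment bound the loss rate below by `ν (1+|v|)^γ`
(`loss_lower`, `loss_alternative`); if the mass or the angular measure is zero, the gain term
vanishes. Write `f = G + U`, where `G` is the minimum of `f` and the barrier and `U` is the excess.
The angular kernel is folded onto `cos θ ≥ 0` (`gain_sym`) and split in two. The part where the
kernel is large or the collision nearly grazing has small angular integral; since `G` is below the
barrier at `v'` and the change of variables to `v'_*` is nondegenerate, its contribution is a small
multiple of `κ² (1+|v|)^{γ-q}` (`gain_grazing`). The remaining part allows both changes of variables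
and is controlled by the square of a weighted `L²` norm of `G` (`gain_bounded`), which is only `O(κ)`
(`trunc_sq_le`). For large `κ` the gain is therefore at most `ν κ² (1+|v|)^{γ-q}` plus a
defect which is linear in `U` (`gain_bound`).

Where `f` is above the barrier, the loss absorbs the first summand, so that `U(t,v)` is at most the
time integral of the defect (`collision_le_defect`, `ode_excess`). The `L¹` norm of the defect is a
multiple of that of `U`, so Grönwall's lemma gives `U = 0` almost everywhere; the changes of variables
then show that the defect is zero at every point, hence so is `U` (`excess_eq_zero`).

The changes of variables `v_* ↦ v'`, `v_* ↦ v'_*` integrated over `σ` rest on rotation invariance only: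
averaging over the orthogonal group makes the integrand radial (`lintegral_angular`). As `b` need not
be Borel, it is replaced by a Borel function agreeing with it for almost every `σ` in every direction
(`exists_borel_kernel`). -/

open MeasureTheory Real RealInnerProductSpace ENNReal

noncomputable section

/-- Euclidean space `ℝ^N`. -/
abbrev Rn (N : ℕ) := EuclideanSpace ℝ (Fin N)

/-- Surface measure on the unit sphere `S^{N-1} ⊂ ℝ^N`: the `(N-1)`-dimensional
Hausdorff measure restricted to the sphere. -/
def sphMeas (N : ℕ) : Measure (Rn N) :=
  (μH[(N : ℝ) - 1]).restrict (Metric.sphere (0 : Rn N) 1)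

/-- Post-collisional velocity `v' = (v+v_*)/2 + (|v-v_*|/2) σ`. -/
def vP (N : ℕ) (v w σ : Rn N) : Rn N :=
  (2:ℝ)⁻¹ • (v + w) + (‖v - w‖ / 2) • σ

/-- Post-collisional velocity `v'_* = (v+v_*)/2 - (|v-v_*|/2) σ`. -/
def vSP (N : ℕ) (v w σ : Rn N) : Rn N :=
  (2:ℝ)⁻¹ • (v + w) - (‖v - w‖ / 2) • σ

/-- Cosine of the deviation angle: `cos θ = σ · (v - v_*)/|v - v_*|`. -/
def cosTheta (N : ℕ) (v w σ : Rn N) : ℝ := ⟪σ, v - w⟫ / ‖v - w‖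

/-- The Boltzmann collision operator `Q(g,f)` for a kernel `B = Φ(|v-v_*|) b(cos θ)`. -/
def Qop (N : ℕ) (Φ b : ℝ → ℝ) (g f : Rn N → ℝ) (v : Rn N) : ℝ :=
  ∫ w : Rn N, ∫ σ : Rn N,
    Φ ‖v - w‖ * b (cosTheta N v w σ) *
      (g (vSP N v w σ) * f (vP N v w σ) - g w * f v) ∂(sphMeas N)

/-- Weighted norm `‖f‖_{L¹_s} = ∫ |f(v)| (1+|v|²)^{s/2} dv`, valued in `[0,∞]`. -/
def L1s (N : ℕ) (s : ℝ) (f : Rn N → ℝ) : ℝ≥0∞ :=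
  ∫⁻ v : Rn N, ENNReal.ofReal (|f v| * (1 + ‖v‖ ^ 2) ^ (s / 2))

/-- Weighted norm `‖f‖_{L²_s} = (∫ |f(v)|² (1+|v|²)^s dv)^{1/2}`, valued in `[0,∞]`. -/
def L2s (N : ℕ) (s : ℝ) (f : Rn N → ℝ) : ℝ≥0∞ :=
  (∫⁻ v : Rn N, ENNReal.ofReal (|f v| ^ 2 * (1 + ‖v‖ ^ 2) ^ s)) ^ (1/2 : ℝ)

/-- Assumptions (H1)-(H2)-(H3) on the collision kernel `B = Φ(|v-v_*|) b(cos θ)`. -/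
structure KernelOK (N : ℕ) (Φ b : ℝ → ℝ) (γ : ℝ) : Prop where
  gamma_mem : γ ∈ Set.Ioc (-2 : ℝ) 0
  phi_smooth : ContDiff ℝ (⊤ : ℕ∞) Φ
  phi_bounds : ∃ cΦ CΦ : ℝ, 0 < cΦ ∧ 0 < CΦ ∧ ∀ z : Rn N,
    cΦ * (1 + ‖z‖) ^ γ ≤ Φ ‖z‖ ∧ Φ ‖z‖ ≤ CΦ * (1 + ‖z‖) ^ γ
  phi_deriv_bounds : ∀ p : ℕ, 0 < p → ∃ C : ℝ, ∀ r : ℝ, |iteratedDeriv p Φ r| ≤ C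
  b_pos : ∃ b₀ : ℝ, 0 < b₀ ∧ ∀ x : ℝ, b₀ ≤ b x
  b_integrable : ∀ u : Rn N, ‖u‖ = 1 →
    Integrable (fun σ : Rn N => b ⟪u, σ⟫) (sphMeas N)

/-- A solution of the spatially homogeneous Boltzmann equation with initial datum `f_in`:
nonnegative, measurable, in `L¹_2` at each time, satisfying the Duhamel (integrated) form of
the equation, and conserving mass, momentum and energy. -/
structure IsSolution (N : ℕ) (Φ b : ℝ → ℝ) (f : ℝ → Rn N → ℝ) (fIn : Rn N → ℝ) : Prop where
  nonneg : ∀ t v, 0 ≤ f t v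
  meas : Measurable (Function.uncurry f)
  mem_L1_2 : ∀ t : ℝ, 0 ≤ t → L1s N 2 (f t) < ⊤
  eqn : ∀ t : ℝ, 0 ≤ t → ∀ v : Rn N,
    f t v = fIn v + ∫ τ in Set.Ioc (0:ℝ) t, Qop N Φ b (f τ) (f τ) v
  mass : ∀ t : ℝ, 0 ≤ t → ∫ v : Rn N, f t v = ∫ v : Rn N, fIn v
  momentum : ∀ t : ℝ, 0 ≤ t → ∀ i : Fin N,
    ∫ v : Rn N, f t v * v i = ∫ v : Rn N, fIn v * v i
  energy : ∀ t : ℝ, 0 ≤ t →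
    ∫ v : Rn N, f t v * ‖v‖ ^ 2 = ∫ v : Rn N, fIn v * ‖v‖ ^ 2
/-- First-order partial derivative in the `i`-th coordinate direction. -/
def pderiv (N : ℕ) (i : Fin N) (f : Rn N → ℝ) (v : Rn N) : ℝ :=
  fderiv ℝ f v (EuclideanSpace.single i 1)

/-- Multi-index partial derivative `∂^m f` for a multi-index `m : Fin N → ℕ`. -/
def mderiv (N : ℕ) (m : Fin N → ℕ) (f : Rn N → ℝ) : Rn N → ℝ :=
  (List.finRange N).foldr (fun i g => (pderiv N i)^[m i] g) f

/-- The finite set of multi-indices of order at most `k`. -/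
def multiIdx (N k : ℕ) : Finset (Fin N → ℕ) :=
  (Fintype.piFinset fun _ : Fin N => Finset.range (k+1)).filter fun m => ∑ i, m i ≤ k

/-- Squared Sobolev norm `‖f‖²_{H^k} = ∑_{|m| ≤ k} ‖∂^m f‖²_{L²}`, valued in `[0,∞]`. -/
def HkNormSq (N k : ℕ) (f : Rn N → ℝ) : ℝ≥0∞ :=
  ∑ m ∈ multiIdx N k, ∫⁻ v : Rn N, ENNReal.ofReal (|mderiv N m f v| ^ 2)

/-- Sobolev norm `‖f‖_{H^k}`, valued in `[0,∞]`. -/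
def HkNorm (N k : ℕ) (f : Rn N → ℝ) : ℝ≥0∞ := HkNormSq N k f ^ (1/2 : ℝ)

/-- The Maxwellian distribution with density `ρ`, temperature `T` and mean velocity `u`. -/
def maxwellian (N : ℕ) (ρ T : ℝ) (u : Rn N) (v : Rn N) : ℝ :=
  ρ / (2 * π * T) ^ ((N : ℝ) / 2) * Real.exp (-‖v - u‖ ^ 2 / (2 * T))

/-- Mass `ρ = ∫ f`. -/
def massOf (N : ℕ) (f : Rn N → ℝ) : ℝ := ∫ v : Rn N, f v

/-- Mean velocity `u = ρ⁻¹ ∫ v f(v) dv`. -/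
def velOf (N : ℕ) (f : Rn N → ℝ) : Rn N := (massOf N f)⁻¹ • ∫ v : Rn N, f v • v

/-- Temperature `T = (Nρ)⁻¹ ∫ |v-u|² f(v) dv`. -/
def tempOf (N : ℕ) (f : Rn N → ℝ) : ℝ :=
  ((N : ℝ) * massOf N f)⁻¹ * ∫ v : Rn N, f v * ‖v - velOf N f‖ ^ 2

/-! ### Rotational averaging and angular changes of variables -/

/-- The orthogonal group of `ℝ^N`, as a topological group of operators. -/
abbrev OG (N : ℕ) := unitary (Rn N →L[ℝ] Rn N)

instance (N : ℕ) : ContinuousStar (Rn N →L[ℝ] Rn N) :=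
  ⟨(ContinuousLinearMap.adjoint (𝕜 := ℝ) (E := Rn N) (F := Rn N)).continuous⟩

instance (N : ℕ) : CompactSpace (OG N) := by
  refine isCompact_iff_compactSpace.1
    (Metric.isCompact_of_isClosed_isBounded isClosed_unitary ?_)
  refine (Metric.isBounded_closedBall (x := (0 : Rn N →L[ℝ] Rn N)) (r := 1)).subset ?_
  intro u hu
  rw [mem_closedBall_zero_iff]
  refine ContinuousLinearMap.opNorm_le_bound _ zero_le_one fun x => ?_
  rw [one_mul, u.norm_map_of_mem_unitary hu]

/-- Haar measure on the orthogonal group, of total mass one. -/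
def ogHaar (N : ℕ) : Measure (OG N) := Measure.haarMeasure ⊤

instance (N : ℕ) : (ogHaar N).IsMulLeftInvariant := by unfold ogHaar; infer_instance
instance (N : ℕ) : IsProbabilityMeasure (ogHaar N) :=
  ⟨by simpa [ogHaar] using Measure.haarMeasure_self (K₀ := (⊤ : TopologicalSpace.PositiveCompacts (OG N)))⟩

/-- The average of `h` over the orthogonal group; a radial function. -/
def rotAvg (N : ℕ) (h : Rn N → ℝ≥0∞) (y : Rn N) : ℝ≥0∞ :=
  ∫⁻ O : OG N, h (((O⁻¹ : OG N) : Rn N →L[ℝ] Rn N) y) ∂(ogHaar N)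

lemma continuous_og_apply (N : ℕ) :
    Continuous fun p : OG N × Rn N => ((p.1⁻¹ : OG N) : Rn N →L[ℝ] Rn N) p.2 := by
  have : Continuous fun p : OG N × Rn N => ((p.1⁻¹ : OG N) : Rn N →L[ℝ] Rn N) :=
    continuous_subtype_val.comp (continuous_inv.comp continuous_fst)
  exact this.clm_apply continuous_snd

lemma measurable_rotAvg {N : ℕ} {h : Rn N → ℝ≥0∞} (hh : Measurable h) :
    Measurable (rotAvg N h) := by
  have := (continuous_og_apply N).measurable
  exact (hh.comp this).lintegral_prod_left'

/-- Linear isometries act transitively on spheres (by reflections). -/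
lemma exists_isometry {N : ℕ} {x y : Rn N} (h : ‖x‖ = ‖y‖) :
    ∃ T : Rn N ≃ₗᵢ[ℝ] Rn N, T x = y :=
  ⟨_, Submodule.reflection_sub h⟩

lemma rotAvg_isometry {N : ℕ} (h : Rn N → ℝ≥0∞) (T : Rn N ≃ₗᵢ[ℝ] Rn N) (y : Rn N) :
    rotAvg N h (T y) = rotAvg N h y := by
  set U : OG N := Unitary.linearIsometryEquiv.symm T with hU
  have hUT : ∀ x, (U : Rn N →L[ℝ] Rn N) x = T x := fun x => by rw [hU]; rfl
  unfold rotAvg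
  rw [← lintegral_mul_left_eq_self (μ := ogHaar N)
    (fun O : OG N => h (((O⁻¹ : OG N) : Rn N →L[ℝ] Rn N) (T y))) U]
  refine lintegral_congr fun O => ?_
  congr 1
  rw [mul_inv_rev, ← hUT]
  have : ((U⁻¹ : OG N) * U : OG N) = 1 := inv_mul_cancel U
  have h2 : ((U⁻¹ : OG N) : Rn N →L[ℝ] Rn N) ((U : Rn N →L[ℝ] Rn N) y) = y := by
    rw [← mul_apply_eq_comp, ← Submonoid.coe_mul, this]
    rfl
  rw [Submonoid.coe_mul, mul_apply_eq_comp, h2]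

lemma rotAvg_congr {N : ℕ} (h : Rn N → ℝ≥0∞) {x y : Rn N} (hxy : ‖x‖ = ‖y‖) :
    rotAvg N h x = rotAvg N h y := by
  obtain ⟨T, rfl⟩ := exists_isometry hxy
  exact (rotAvg_isometry h T x).symm

lemma lintegral_rotAvg {N : ℕ} {h : Rn N → ℝ≥0∞} (hh : Measurable h) :
    ∫⁻ y, rotAvg N h y = ∫⁻ y, h y := by
  unfold rotAvg
  have hm : Measurable fun p : Rn N × OG N => h (((p.2⁻¹ : OG N) : Rn N →L[ℝ] Rn N) p.1) :=
    hh.comp ((continuous_og_apply N).comp continuous_swap).measurable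
  rw [lintegral_lintegral_swap hm.aemeasurable]
  have : ∀ O : OG N, ∫⁻ y, h (((O⁻¹ : OG N) : Rn N →L[ℝ] Rn N) y) = ∫⁻ y, h y := fun O =>
    (LinearIsometryEquiv.measurePreserving (Unitary.linearIsometryEquiv (O⁻¹))).lintegral_comp hh
  simp [this]

/-- Invariance of the surface measure under linear isometries. -/
lemma sphMeas_measurePreserving (N : ℕ) (T : Rn N ≃ₗᵢ[ℝ] Rn N) :
    MeasurePreserving T (sphMeas N) (sphMeas N) := by
  have h := (T.toIsometryEquiv.measurePreserving_hausdorffMeasure ((N : ℝ) - 1)).restrict_preimage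
    (s := Metric.sphere (0 : Rn N) 1) Metric.isClosed_sphere.measurableSet
  have e : (T.toIsometryEquiv ⁻¹' Metric.sphere (0 : Rn N) 1) = Metric.sphere (0 : Rn N) 1 := by
    ext x; simp
  rw [e] at h
  exact h

lemma sphMeas_norm (N : ℕ) : ∀ᵐ σ ∂(sphMeas N), ‖σ‖ = 1 := by
  unfold sphMeas
  filter_upwards [ae_restrict_mem Metric.isClosed_sphere.measurableSet] with σ hσ
  simpa using hσ

lemma sphMeas_ne (N : ℕ) (hN : 2 ≤ N) (e : Rn N) : ∀ᵐ σ ∂(sphMeas N), σ ≠ e := by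
  have : (2 : ℝ) ≤ N := by exact_mod_cast hN
  have := Measure.nullSingletonClass_hausdorff (Rn N) (d := (N : ℝ) - 1) (by linarith)
  unfold sphMeas
  have h0 : (μH[(N : ℝ) - 1]).restrict (Metric.sphere (0 : Rn N) 1) {e} = 0 := by simp
  exact compl_mem_ae_iff.2 h0

lemma lintegral_dilation {N : ℕ} {h : Rn N → ℝ≥0∞} (hh : Measurable h) {c : ℝ} (hc : 0 < c) :
    ∫⁻ z, h (c • z) = ENNReal.ofReal ((c ^ N)⁻¹) * ∫⁻ z, h z := by
  have h1 := Measure.map_addHaar_smul (volume : Measure (Rn N)) hc.ne'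
  have h2 : ∫⁻ z, h (c • z) = ∫⁻ z, h z ∂(Measure.map (fun x => c • x) volume) :=
    (lintegral_map hh (measurable_const_smul c)).symm
  rw [h2, h1, lintegral_smul_measure, finrank_euclideanSpace_fin, abs_of_pos (by positivity)]
  rfl

/-- Tonelli for the outer integral against two inner ones, the weight not depending on the outer
variable. -/
lemma lintegral_swap3 {G E H : Type*} [MeasurableSpace G] [MeasurableSpace E] [MeasurableSpace H]
    {κ : Measure G} {ν μ : Measure E} [SFinite κ] [SFinite ν] [SFinite μ]
    {w : E × E → ℝ≥0∞} (hw : Measurable w) {Y : E × E → H} (hY : Measurable Y)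
    {k : G × H → ℝ≥0∞} (hk : Measurable k) :
    ∫⁻ O, ∫⁻ z, ∫⁻ σ, w (z, σ) * k (O, Y (z, σ)) ∂μ ∂ν ∂κ
      = ∫⁻ z, ∫⁻ σ, w (z, σ) * ∫⁻ O, k (O, Y (z, σ)) ∂κ ∂μ ∂ν := by
  have m3 : Measurable fun p : (G × E) × E => w (p.1.2, p.2) * k (p.1.1, Y (p.1.2, p.2)) := by
    fun_prop
  rw [lintegral_lintegral_swap (f := fun O z => ∫⁻ σ, w (z, σ) * k (O, Y (z, σ)) ∂μ)
    m3.lintegral_prod_right'.aemeasurable]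
  refine lintegral_congr fun z => ?_
  have m4 : Measurable fun p : G × E => w (z, p.2) * k (p.1, Y (z, p.2)) := by fun_prop
  rw [lintegral_lintegral_swap (f := fun O σ => w (z, σ) * k (O, Y (z, σ))) m4.aemeasurable]
  refine lintegral_congr fun σ => ?_
  rw [lintegral_const_mul]
  fun_prop

/-- Integration in `(z, σ)` against a kernel depending only on the deviation angle, of a function
of `a z + b |z| σ`, reduces by rotational averaging to a plain integral over `ℝ^N`. -/
lemma lintegral_angular {N : ℕ} (μ : Measure (Rn N)) [SFinite μ]
    (hμ : ∀ T : Rn N ≃ₗᵢ[ℝ] Rn N, MeasurePreserving T μ μ) {β : ℝ → ℝ≥0∞} (hβ : Measurable β)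
    {h : Rn N → ℝ≥0∞} (hh : Measurable h) (a b : ℝ) (e : Rn N) (he : ‖e‖ = 1)
    (hne : ∀ᵐ s ∂μ, a • e + b • s ≠ 0) :
    ∫⁻ z : Rn N, ∫⁻ σ, β (⟪σ, z⟫ / ‖z‖) * h (a • z + (b * ‖z‖) • σ) ∂μ
      = (∫⁻ s, β ⟪s, e⟫ * ENNReal.ofReal ((‖a • e + b • s‖ ^ N)⁻¹) ∂μ) * ∫⁻ y, h y := by
  set F : (Rn N → ℝ≥0∞) → ℝ≥0∞ := fun k =>
    ∫⁻ z : Rn N, ∫⁻ σ, β (⟪σ, z⟫ / ‖z‖) * k (a • z + (b * ‖z‖) • σ) ∂μ with hF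
  have mY : Measurable fun p : Rn N × Rn N => a • p.1 + (b * ‖p.1‖) • p.2 := by fun_prop
  have mβ : Measurable fun p : Rn N × Rn N => β (⟪p.2, p.1⟫ / ‖p.1‖) := by
    apply hβ.comp; fun_prop
  have inv : ∀ k : Rn N → ℝ≥0∞, Measurable k → ∀ T : Rn N ≃ₗᵢ[ℝ] Rn N,
      F (fun y => k (T y)) = F k := by
    intro k hk T
    have hm : Measurable fun z : Rn N => ∫⁻ σ, β (⟪σ, z⟫ / ‖z‖) * k (a • z + (b * ‖z‖) • σ) ∂μ :=
      (mβ.mul (hk.comp mY)).lintegral_prod_right'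
    simp only [hF]
    refine Eq.trans (lintegral_congr fun z => ?_) (T.measurePreserving.lintegral_comp hm)
    have hm2 : Measurable fun σ : Rn N =>
        β (⟪σ, T z⟫ / ‖T z‖) * k (a • T z + (b * ‖T z‖) • σ) := by
      generalize T z = x
      fun_prop
    refine Eq.trans (lintegral_congr fun σ => ?_) ((hμ T).lintegral_comp hm2)
    simp
  have avg : F h = F (rotAvg N h) := by
    have h1 : ∀ O : OG N, F (fun y => h (((O⁻¹ : OG N) : Rn N →L[ℝ] Rn N) y)) = F h := by
      intro O
      have h0 : (fun y => h (((O⁻¹ : OG N) : Rn N →L[ℝ] Rn N) y))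
          = fun y => h (Unitary.linearIsometryEquiv (O⁻¹) y) := rfl
      rw [h0]
      exact inv h hh _
    have h2 : F h = ∫⁻ O : OG N, F (fun y => h (((O⁻¹ : OG N) : Rn N →L[ℝ] Rn N) y)) ∂(ogHaar N) := by
      simp [h1]
    rw [h2]
    exact lintegral_swap3 (κ := ogHaar N) (ν := volume) (μ := μ) mβ mY
      (hh.comp (continuous_og_apply N).measurable)
  change F h = _
  rw [avg]
  have mr := measurable_rotAvg hh
  have inner : ∀ z : Rn N, z ≠ 0 →
      ∫⁻ σ, β (⟪σ, z⟫ / ‖z‖) * rotAvg N h (a • z + (b * ‖z‖) • σ) ∂μ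
        = ∫⁻ s, β ⟪s, e⟫ * rotAvg N h (‖a • e + b • s‖ • z) ∂μ := by
    intro z hz
    have hz' : ‖z‖ ≠ 0 := norm_ne_zero_iff.2 hz
    obtain ⟨T, hT⟩ := exists_isometry (x := e) (y := ‖z‖⁻¹ • z)
      (by rw [he, norm_smul, norm_inv, norm_norm, inv_mul_cancel₀ hz'])
    have hT' : z = ‖z‖ • T e := by rw [hT, smul_smul, mul_inv_cancel₀ hz', one_smul]
    have hm2 : Measurable fun σ : Rn N =>
        β (⟪σ, z⟫ / ‖z‖) * rotAvg N h (a • z + (b * ‖z‖) • σ) := by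
      fun_prop
    refine ((hμ T).lintegral_comp hm2).symm.trans (lintegral_congr fun s => ?_)
    refine congrArg₂ (· * ·) (congrArg β ?_) (rotAvg_congr h ?_)
    · have : ⟪T s, z⟫ = ‖z‖ * ⟪s, e⟫ := by
        conv_lhs => rw [hT']
        rw [inner_smul_right, T.inner_map_map]
      rw [this, mul_div_cancel_left₀ _ hz']
    · have : a • z + (b * ‖z‖) • T s = ‖z‖ • T (a • e + b • s) := by
        conv_lhs => rw [hT']
        simp only [norm_smul, norm_norm, T.norm_map, he, map_add, map_smul, smul_add, smul_smul]
        congr 2 <;> ring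
      rw [this, norm_smul, norm_smul, T.norm_map, norm_norm, norm_norm, mul_comm]
  have hae : ∀ᵐ z : Rn N, z ≠ 0 := by
    have : Nontrivial (Rn N) := ⟨e, 0, by intro h0; simp [h0] at he⟩
    exact Measure.ae_ne volume 0
  have step : F (rotAvg N h)
      = ∫⁻ z : Rn N, ∫⁻ s, β ⟪s, e⟫ * rotAvg N h (‖a • e + b • s‖ • z) ∂μ :=
    lintegral_congr_ae (hae.mono inner)
  rw [step]
  have mβ' : Measurable fun s : Rn N => β ⟪s, e⟫ := by apply hβ.comp; fun_prop
  have m5 : Measurable fun p : Rn N × Rn N =>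
      β ⟪p.2, e⟫ * rotAvg N h (‖a • e + b • p.2‖ • p.1) :=
    (mβ'.comp measurable_snd).mul (mr.comp (by fun_prop))
  rw [lintegral_lintegral_swap m5.aemeasurable]
  have : ∀ᵐ s ∂μ, ∫⁻ z : Rn N, β ⟪s, e⟫ * rotAvg N h (‖a • e + b • s‖ • z)
      = β ⟪s, e⟫ * ENNReal.ofReal ((‖a • e + b • s‖ ^ N)⁻¹) * ∫⁻ y, h y := by
    filter_upwards [hne] with s hs
    have hm : Measurable fun z : Rn N => rotAvg N h (‖a • e + b • s‖ • z) := mr.comp (by fun_prop)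
    rw [lintegral_const_mul _ hm, lintegral_dilation mr (norm_pos_iff.2 hs),
      lintegral_rotAvg hh, mul_assoc]
  rw [lintegral_congr_ae this, lintegral_mul_const]
  exact mβ'.mul (by fun_prop)

/-! ### A Borel version of the angular kernel -/

/-- A fibre-saturated null-measurable set contains a Borel, still saturated, subset of full measure:
its image is taken as a union of images of compact sets. -/
lemma exists_measurable_core {X : Type*} [TopologicalSpace X] [T2Space X] [MeasurableSpace X] [BorelSpace X]
    {μ : Measure X} [IsFiniteMeasure μ] [μ.InnerRegularCompactLTTop]
    {pr : X → ℝ} (hpr : Continuous pr) {A : Set ℝ} (hA : NullMeasurableSet (pr ⁻¹' A) μ) :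
    ∃ B ⊆ A, MeasurableSet B ∧ μ (pr ⁻¹' A \ pr ⁻¹' B) = 0 := by
  obtain ⟨A', hA'sub, hA'm, hA'eq⟩ := hA.exists_measurable_subset_ae_eq
  have hK : ∀ n : ℕ, ∃ K ⊆ A', IsCompact K ∧ μ (A' \ K) < ((n : ℝ≥0∞) + 1)⁻¹ := fun n =>
    by
    have hfin : μ A' ≠ ⊤ := measure_ne_top μ _
    obtain ⟨K, h1, h2, h3⟩ := hA'm.exists_isCompact_sdiff_lt hfin (ε := ((n : ℝ≥0∞) + 1)⁻¹) (by simp)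
    exact ⟨K, h1, h2, h3⟩
  choose K hKA hKc hKμ using hK
  refine ⟨⋃ n, pr '' K n, ?_, ?_, ?_⟩
  · rw [Set.iUnion_subset_iff]
    rintro n _ ⟨x, hx, rfl⟩
    exact hA'sub (hKA n hx)
  · exact MeasurableSet.iUnion fun n => ((hKc n).image hpr).measurableSet
  · have h1 : μ (pr ⁻¹' A \ A') = 0 := by
      exact ae_le_set.1 hA'eq.symm.le
    have h2 : μ (A' \ ⋃ n, K n) = 0 := by
      refine le_antisymm (ge_of_tendsto' ENNReal.tendsto_inv_nat_nhds_zero fun n => ?_) zero_le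
      rcases n with _ | n
      · simp
      · refine (measure_mono (Set.sdiff_subset_sdiff_right (Set.subset_iUnion K n))).trans ?_
        simpa using (hKμ n).le
    refine measure_mono_null ?_ (measure_union_null h1 h2)
    intro x hx
    by_cases hxA : x ∈ A'
    · right
      refine ⟨hxA, fun hxK => hx.2 ?_⟩
      obtain ⟨n, hn⟩ := Set.mem_iUnion.1 hxK
      exact Set.mem_iUnion.2 ⟨n, x, hn, rfl⟩
    · exact Or.inl ⟨hx.1, hxA⟩

/-- Measurability descends along a continuous map to its image measure, because continuous images
of compact sets are compact. -/
lemma aemeasurable_of_comp {X : Type*} [TopologicalSpace X] [T2Space X] [MeasurableSpace X] [BorelSpace X]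
    {μ : Measure X} [IsFiniteMeasure μ] [μ.InnerRegularCompactLTTop]
    {pr : X → ℝ} (hpr : Continuous pr) {b : ℝ → ℝ} (hb : AEMeasurable (fun x => b (pr x)) μ) :
    AEMeasurable b (μ.map pr) := by
  apply NullMeasurable.aemeasurable
  intro S hS
  have hA : NullMeasurableSet (pr ⁻¹' (b ⁻¹' S)) μ := hb.nullMeasurable hS
  obtain ⟨B₁, hB₁, hm₁, h₁⟩ := exists_measurable_core hpr hA
  obtain ⟨B₂, hB₂, hm₂, h₂⟩ := exists_measurable_core hpr (A := (b ⁻¹' S)ᶜ) hA.compl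
  refine (hm₁.nullMeasurableSet (μ := μ.map pr)).congr ?_
  refine Filter.EventuallyEq.symm ((ae_le_set.2 ?_).antisymm hB₁.eventuallyLE)
  have hsub : b ⁻¹' S \ B₁ ⊆ (B₁ ∪ B₂)ᶜ := by
    rintro x ⟨hx, hx1⟩ (h | h)
    · exact hx1 h
    · exact hB₂ h hx
  refine measure_mono_null hsub ?_
  rw [Measure.map_apply hpr.measurable (hm₁.union hm₂).compl]
  refine measure_mono_null ?_ (measure_union_null h₁ h₂)
  intro x hx
  have hx' : pr x ∉ B₁ ∧ pr x ∉ B₂ := by simpa using hx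
  by_cases hxS : pr x ∈ b ⁻¹' S
  · exact Or.inl ⟨hxS, hx'.1⟩
  · exact Or.inr ⟨hxS, hx'.2⟩

/-- A Borel version of the angular kernel, valid simultaneously for all directions. -/
lemma exists_borel_kernel {N : ℕ} (μ : Measure (Rn N)) [IsFiniteMeasure μ]
    (hμ : ∀ T : Rn N ≃ₗᵢ[ℝ] Rn N, MeasurePreserving T μ μ) {b : ℝ → ℝ} (e : Rn N) (he : ‖e‖ = 1)
    (hb : AEMeasurable (fun σ : Rn N => b ⟪e, σ⟫) μ) :
    ∃ β : ℝ → ℝ, Measurable β ∧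
      ∀ u : Rn N, ‖u‖ = 1 → ∀ᵐ σ ∂μ, b ⟪u, σ⟫ = β ⟪u, σ⟫ := by
  have hpr : Continuous fun σ : Rn N => ⟪e, σ⟫ := by fun_prop
  have h := aemeasurable_of_comp hpr hb
  refine ⟨h.mk b, h.measurable_mk, fun u hu => ?_⟩
  have h1 : ∀ᵐ σ ∂μ, b ⟪e, σ⟫ = h.mk b ⟪e, σ⟫ :=
    ae_of_ae_map hpr.aemeasurable h.ae_eq_mk
  obtain ⟨T, rfl⟩ := exists_isometry (he.trans hu.symm)
  filter_upwards [(hμ T.symm).quasiMeasurePreserving.ae h1] with σ hσ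
  have : ⟪e, T.symm σ⟫ = ⟪T e, σ⟫ := by
    rw [← T.inner_map_map, T.apply_symm_apply]
  rwa [this] at hσ

/-! ### Integrals over post-collisional velocities -/

/-- The properties of the surface measure of the unit sphere on which the estimates rest. -/
structure AngMeas {N : ℕ} (μ : Measure (Rn N)) : Prop where
  fin : IsFiniteMeasure μ
  inv : ∀ T : Rn N ≃ₗᵢ[ℝ] Rn N, MeasurePreserving T μ μ
  norm : ∀ᵐ σ ∂μ, ‖σ‖ = 1
  ne : ∀ e : Rn N, ∀ᵐ σ ∂μ, σ ≠ e

/-- The velocity `v'` in terms of `v`, the relative velocity `z = v - v_*` and `σ`. -/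
def pV {N : ℕ} (v z σ : Rn N) : Rn N := v - ((1/2 : ℝ) • z + (-(1/2) * ‖z‖ : ℝ) • σ)

/-- The velocity `v'_*` in terms of `v`, the relative velocity `z = v - v_*` and `σ`. -/
def sV {N : ℕ} (v z σ : Rn N) : Rn N := v - ((1/2 : ℝ) • z + ((1/2) * ‖z‖ : ℝ) • σ)

@[fun_prop]
lemma measurable_pV {N : ℕ} {X : Type*} [MeasurableSpace X] {v z σ : X → Rn N} (hv : Measurable v)
    (hz : Measurable z) (hσ : Measurable σ) : Measurable fun x => pV (v x) (z x) (σ x) := by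
  unfold pV; fun_prop

@[fun_prop]
lemma measurable_sV {N : ℕ} {X : Type*} [MeasurableSpace X] {v z σ : X → Rn N} (hv : Measurable v)
    (hz : Measurable z) (hσ : Measurable σ) : Measurable fun x => sV (v x) (z x) (σ x) := by
  unfold sV; fun_prop

lemma norm_half_add {N : ℕ} {e s : Rn N} (he : ‖e‖ = 1) (hs : ‖s‖ = 1) :
    ‖(1/2 : ℝ) • e + (1/2 : ℝ) • s‖ ^ 2 = (1 + ⟪s, e⟫) / 2 := by
  rw [norm_add_sq_real, norm_smul, norm_smul, he, hs, inner_smul_left, inner_smul_right,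
    real_inner_comm]
  simp; ring

lemma norm_half_sub {N : ℕ} {e s : Rn N} (he : ‖e‖ = 1) (hs : ‖s‖ = 1) :
    ‖(1/2 : ℝ) • e + (-(1/2) : ℝ) • s‖ ^ 2 = (1 - ⟪s, e⟫) / 2 := by
  rw [norm_add_sq_real, norm_smul, norm_smul, he, hs, inner_smul_left, inner_smul_right,
    real_inner_comm]
  simp; ring

section
variable {N : ℕ} {μ : Measure (Rn N)} (hμ : AngMeas μ) {β : ℝ → ℝ≥0∞} (hβ : Measurable β)
  {h : Rn N → ℝ≥0∞} (hh : Measurable h) (e : Rn N) (he : ‖e‖ = 1)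
include hμ hβ hh he

/-- The change of variables to `v'_*`. -/
lemma lintegral_sV (v : Rn N) :
    ∫⁻ z, ∫⁻ σ, β (⟪σ, z⟫ / ‖z‖) * h (sV v z σ) ∂μ
      = (∫⁻ s, β ⟪s, e⟫ * ENNReal.ofReal ((‖(1/2 : ℝ) • e + (1/2 : ℝ) • s‖ ^ N)⁻¹) ∂μ)
        * ∫⁻ y, h y := by
  have := hμ.fin
  have hm : Measurable fun y => h (v - y) := by fun_prop
  have h1 := lintegral_angular μ hμ.inv hβ hm (1/2) (1/2) e he (by
    filter_upwards [hμ.ne (-e)] with s hs h0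
    apply hs
    rw [← smul_add, smul_eq_zero] at h0
    exact eq_neg_of_add_eq_zero_right (h0.resolve_left (by norm_num)))
  rw [lintegral_sub_left_eq_self h v] at h1
  exact h1

/-- The change of variables to `v'`. -/
lemma lintegral_pV (v : Rn N) :
    ∫⁻ z, ∫⁻ σ, β (⟪σ, z⟫ / ‖z‖) * h (pV v z σ) ∂μ
      = (∫⁻ s, β ⟪s, e⟫ * ENNReal.ofReal ((‖(1/2 : ℝ) • e + (-(1/2) : ℝ) • s‖ ^ N)⁻¹) ∂μ)
        * ∫⁻ y, h y := by
  have := hμ.fin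
  have hm : Measurable fun y => h (v - y) := by fun_prop
  have h1 := lintegral_angular μ hμ.inv hβ hm (1/2) (-(1/2)) e he (by
    filter_upwards [hμ.ne e] with s hs h0
    apply hs
    rw [neg_smul, ← sub_eq_add_neg, ← smul_sub, smul_eq_zero] at h0
    exact (sub_eq_zero.1 (h0.resolve_left (by norm_num))).symm)
  rw [lintegral_sub_left_eq_self h v] at h1
  exact h1

/-- Polar-type formula: the direction of `z` may be replaced by `σ`. -/
lemma lintegral_zV (v : Rn N) :
    ∫⁻ z, ∫⁻ σ, β (⟪σ, z⟫ / ‖z‖) * h (v - ‖z‖ • σ) ∂μ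
      = (∫⁻ s, β ⟪s, e⟫ ∂μ) * ∫⁻ y, h y := by
  have := hμ.fin
  have hm : Measurable fun y => h (v - y) := by fun_prop
  have h1 := lintegral_angular μ hμ.inv hβ hm 0 1 e he (by
    filter_upwards [hμ.norm] with s hs h0
    simp at h0
    simp [h0] at hs)
  rw [lintegral_sub_left_eq_self h v] at h1
  simp only [zero_smul, zero_add, one_mul, one_smul] at h1
  rw [h1]
  congr 1
  refine lintegral_congr_ae ?_
  filter_upwards [hμ.norm] with s hs
  simp [hs]

omit he hh in
/-- The Jacobian factor is bounded when the kernel charges only angles with `|e/2 + c s| ≥ r`. -/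
lemma angular_const_le (c : ℝ) (r : ℝ) (hr : 0 < r)
    (hcr : ∀ s : Rn N, ‖s‖ = 1 → β ⟪s, e⟫ ≠ 0 → r ≤ ‖(1/2 : ℝ) • e + c • s‖) :
    ∫⁻ s, β ⟪s, e⟫ * ENNReal.ofReal ((‖(1/2 : ℝ) • e + c • s‖ ^ N)⁻¹) ∂μ
      ≤ (∫⁻ s, β ⟪s, e⟫ ∂μ) * ENNReal.ofReal ((r ^ N)⁻¹) := by
  have mβ' : Measurable fun s : Rn N => β ⟪s, e⟫ := by apply hβ.comp; fun_prop
  rw [← lintegral_mul_const _ mβ']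
  refine lintegral_mono_ae ?_
  filter_upwards [hμ.norm] with s hs
  by_cases h0 : β ⟪s, e⟫ = 0
  · simp [h0]
  · have := hcr s hs h0
    gcongr

end

section
variable {N : ℕ} {μ : Measure (Rn N)} (hμ : AngMeas μ) {β : ℝ → ℝ≥0∞} (hβ : Measurable β)
  {A B : Rn N → ℝ≥0∞} (hA : Measurable A) (hB : Measurable B) (e : Rn N) (he : ‖e‖ = 1)
include hμ hβ hA hB he

/-- The gain operator without kinetic factor is bounded, in fact multiplicative, in `L¹`. -/
lemma lintegral_gain :
    ∫⁻ v, ∫⁻ z, ∫⁻ σ, β (⟪σ, z⟫ / ‖z‖) * (A (pV v z σ) * B (sV v z σ)) ∂μ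
      = (∫⁻ s, β ⟪s, e⟫ ∂μ) * ((∫⁻ y, A y) * ∫⁻ y, B y) := by
  have := hμ.fin
  have mβ : Measurable fun p : Rn N × Rn N => β (⟪p.2, p.1⟫ / ‖p.1‖) := by
    apply hβ.comp; fun_prop
  have k1 : Measurable fun p : Rn N × (Rn N × Rn N) =>
      A (pV p.1 p.2.1 p.2.2) * B (sV p.1 p.2.1 p.2.2) := by fun_prop
  have k2 : Measurable fun p : Rn N × (Rn N × Rn N) => A p.1 * B (p.1 - ‖p.2.1‖ • p.2.2) := by
    fun_prop
  refine (lintegral_swap3 (κ := volume) (ν := volume) (μ := μ) mβ measurable_id k1).trans ?_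
  have : ∀ z σ : Rn N, ∫⁻ v, A (pV v z σ) * B (sV v z σ) = ∫⁻ v, A v * B (v - ‖z‖ • σ) := by
    intro z σ
    rw [← lintegral_sub_right_eq_self (fun v => A v * B (v - ‖z‖ • σ))
      ((1/2 : ℝ) • z + (-(1/2) * ‖z‖ : ℝ) • σ)]
    refine lintegral_congr fun v => ?_
    unfold pV sV
    congr 2
    module
  simp only [id, this]
  refine (lintegral_swap3 (κ := volume) (ν := volume) (μ := μ) mβ measurable_id k2).symm.trans ?_
  have h3 : ∀ v : Rn N, ∫⁻ z, ∫⁻ σ, β (⟪σ, z⟫ / ‖z‖) * (A v * B (v - ‖z‖ • σ)) ∂μ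
      = A v * ((∫⁻ s, β ⟪s, e⟫ ∂μ) * ∫⁻ y, B y) := by
    intro v
    have mi : Measurable fun p : Rn N × Rn N => β (⟪p.2, p.1⟫ / ‖p.1‖) * B (v - ‖p.1‖ • p.2) := by
      fun_prop
    rw [← lintegral_zV hμ hβ hB e he v, ← lintegral_const_mul _ mi.lintegral_prod_right']
    refine lintegral_congr fun z => ?_
    have mi' : Measurable fun σ : Rn N => β (⟪σ, z⟫ / ‖z‖) * B (v - ‖z‖ • σ) := by fun_prop
    rw [← lintegral_const_mul _ mi']
    refine lintegral_congr fun σ => ?_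
    ring
  simp only [id, h3]
  rw [lintegral_mul_const _ hA]
  ring

omit hB in
/-- For every single `v` the gain vanishes as soon as one argument vanishes almost everywhere. -/
lemma gain_eq_zero_left (hA0 : A =ᵐ[volume] 0) (v : Rn N) :
    ∫⁻ z, ∫⁻ σ, β (⟪σ, z⟫ / ‖z‖) * (A (pV v z σ) * B (sV v z σ)) ∂μ = 0 := by
  -- `⊤ * A` still has zero integral and dominates `A (v') B (v'_*)` whatever the value of `B`
  set h : Rn N → ℝ≥0∞ := fun y => ⊤ * A y with hdef
  have mh : Measurable h := by fun_prop
  have hint : ∫⁻ y, h y = 0 := by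
    rw [lintegral_const_mul _ hA, lintegral_congr_ae hA0]; simp
  have h1 := lintegral_pV hμ hβ mh e he v
  rw [hint, mul_zero] at h1
  refine le_antisymm (le_trans ?_ h1.le) zero_le
  gcongr with z σ
  simp only [hdef]
  rw [mul_comm]
  gcongr
  exact le_top

omit hA in
/-- Symmetric version of `gain_eq_zero_left`. -/
lemma gain_eq_zero_right (hB0 : B =ᵐ[volume] 0) (v : Rn N) :
    ∫⁻ z, ∫⁻ σ, β (⟪σ, z⟫ / ‖z‖) * (A (pV v z σ) * B (sV v z σ)) ∂μ = 0 := by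
  set h : Rn N → ℝ≥0∞ := fun y => ⊤ * B y with hdef
  have mh : Measurable h := by fun_prop
  have hint : ∫⁻ y, h y = 0 := by
    rw [lintegral_const_mul _ hB, lintegral_congr_ae hB0]; simp
  have h1 := lintegral_sV hμ hβ mh e he v
  rw [hint, mul_zero] at h1
  refine le_antisymm (le_trans ?_ h1.le) zero_le
  gcongr with z σ
  simp only [hdef]
  gcongr
  exact le_top

end

/-! ### Weights and the two parts of the gain term -/

/-- The polynomial weight `(1+|y|)^a`. -/
def wt {N : ℕ} (a : ℝ) (y : Rn N) : ℝ := (1 + ‖y‖) ^ a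

lemma wt_pos {N : ℕ} (a : ℝ) (y : Rn N) : 0 < wt a y := by unfold wt; positivity

@[fun_prop]
lemma measurable_wt {N : ℕ} {X : Type*} [MeasurableSpace X] (a : ℝ) {y : X → Rn N}
    (hy : Measurable y) : Measurable fun x => wt a (y x) := by unfold wt; fun_prop

lemma wt_add {N : ℕ} (a b : ℝ) (y : Rn N) : wt (a + b) y = wt a y * wt b y :=
  Real.rpow_add (by positivity) _ _

lemma wt_mono {N : ℕ} {a b : ℝ} (h : a ≤ b) (y : Rn N) : wt a y ≤ wt b y :=
  Real.rpow_le_rpow_of_exponent_le (by simp) h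

/-- Peetre's inequality. -/
lemma wt_peetre {N : ℕ} {x y z : Rn N} (h : ‖x‖ ≤ ‖y‖ + ‖z‖) {a : ℝ} (ha : 0 ≤ a) :
    wt (-a) y ≤ wt (-a) x * wt a z := by
  have h1 : wt a x ≤ wt a y * wt a z := by
    unfold wt
    rw [← Real.mul_rpow (by positivity) (by positivity)]
    refine Real.rpow_le_rpow (by positivity) ?_ ha
    nlinarith [norm_nonneg y, norm_nonneg z, mul_nonneg (norm_nonneg y) (norm_nonneg z)]
  have hx : wt (-a) x = (wt a x)⁻¹ := Real.rpow_neg (by positivity) _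
  have hy : wt (-a) y = (wt a y)⁻¹ := Real.rpow_neg (by positivity) _
  have := wt_pos a x
  have := wt_pos a y
  rw [hx, hy, inv_mul_eq_div, inv_le_comm₀ (by positivity) (by have := wt_pos a z; positivity),
    inv_div, div_le_iff₀ (wt_pos a z)]
  exact h1

lemma norm_le_pV_sV {N : ℕ} (v z : Rn N) {σ : Rn N} (hσ : ‖σ‖ = 1) :
    ‖v‖ ≤ ‖pV v z σ‖ + ‖sV v z σ‖ := by
  have h : ‖pV v z σ‖ ^ 2 + ‖sV v z σ‖ ^ 2 = ‖v‖ ^ 2 + ‖v - z‖ ^ 2 := by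
    unfold pV sV
    have e1 := norm_sub_sq_real v ((1/2 : ℝ) • z + (-(1/2) * ‖z‖ : ℝ) • σ)
    have e2 := norm_sub_sq_real v ((1/2 : ℝ) • z + ((1/2) * ‖z‖ : ℝ) • σ)
    have e3 := norm_sub_sq_real v z
    have e4 := norm_add_sq_real ((1/2 : ℝ) • z) ((-(1/2) * ‖z‖ : ℝ) • σ)
    have e5 := norm_add_sq_real ((1/2 : ℝ) • z) (((1/2) * ‖z‖ : ℝ) • σ)
    rw [e1, e2, e3, e4, e5]
    simp only [norm_smul, inner_add_right, inner_smul_right, inner_smul_left, hσ]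
    simp
    ring
  have h1 := norm_nonneg (pV v z σ)
  have h2 := norm_nonneg (sV v z σ)
  refine abs_le_of_sq_le_sq' (a := ‖v‖) ?_ (by positivity) |>.2
  nlinarith [mul_nonneg h1 h2, sq_nonneg ‖v - z‖]

lemma norm_le_z_sV {N : ℕ} (v z : Rn N) {σ : Rn N} (hσ : ‖σ‖ = 1) :
    ‖v‖ ≤ ‖z‖ + ‖sV v z σ‖ := by
  have h1 : v = ((1/2 : ℝ) • z + ((1/2) * ‖z‖ : ℝ) • σ) + sV v z σ := by unfold sV; module
  have h2 : ‖(1/2 : ℝ) • z + ((1/2) * ‖z‖ : ℝ) • σ‖ ≤ ‖z‖ := by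
    refine (norm_add_le _ _).trans ?_
    simp only [norm_smul, hσ]
    simp
    linarith
  calc ‖v‖ ≤ ‖(1/2 : ℝ) • z + ((1/2) * ‖z‖ : ℝ) • σ‖ + ‖sV v z σ‖ := by
        conv_lhs => rw [h1]
        exact norm_add_le _ _
    _ ≤ _ := by gcongr

lemma enn_mul_le_sq_add (a b : ℝ≥0∞) : a * b ≤ a ^ 2 + b ^ 2 := by
  rcases le_total a b with h | h
  · calc a * b ≤ b ^ 2 := by rw [sq]; gcongr
      _ ≤ _ := le_add_self
  · calc a * b ≤ a ^ 2 := by rw [sq]; gcongr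
      _ ≤ _ := le_self_add

/-- The gain operator with kinetic factor `k z` and angular factor `β`, in the variables
`z = v - v_*` and `σ`. -/
def gainO {N : ℕ} (μ : Measure (Rn N)) (k : Rn N → ℝ≥0∞) (β : ℝ → ℝ≥0∞) (A B : Rn N → ℝ≥0∞)
    (v : Rn N) : ℝ≥0∞ :=
  ∫⁻ z, ∫⁻ σ, k z * (β (⟪σ, z⟫ / ‖z‖) * (A (pV v z σ) * B (sV v z σ))) ∂μ

/-- The kinetic factor dominating `Φ`. -/
def kin {N : ℕ} (C γ : ℝ) (z : Rn N) : ℝ≥0∞ := ENNReal.ofReal (C * wt γ z)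

@[fun_prop]
lemma measurable_kin {N : ℕ} {X : Type*} [MeasurableSpace X] (C γ : ℝ) {y : X → Rn N}
    (hy : Measurable y) : Measurable fun x => kin C γ (y x) := by unfold kin; fun_prop

section
variable {N : ℕ} {μ : Measure (Rn N)} (hμ : AngMeas μ) {β : ℝ → ℝ≥0∞} (hβ : Measurable β)
  (e : Rn N) (he : ‖e‖ = 1) {C γ q : ℝ} (hC : 0 ≤ C) (hγ : γ ∈ Set.Ioc (-2 : ℝ) 0) (hq : 0 < q)
include hμ hβ he hC hγ hq

/-- Grazing part of the gain: the factor at `v'` carries the decay, and half of the angles is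
enough to keep the change of variables to `v'_*` nondegenerate. -/
lemma gain_grazing {F G : Rn N → ℝ≥0∞} (hF : Measurable F) {K : ℝ} (hK : 0 ≤ K)
    (hG : ∀ y, G y ≤ ENNReal.ofReal (K * wt (-q) y)) (hpos : ∀ x, β x ≠ 0 → 0 ≤ x) (v : Rn N) :
    gainO μ (kin C γ) β G F v ≤ ENNReal.ofReal (C * K * wt (γ - q) v) *
      (((∫⁻ s, β ⟪s, e⟫ ∂μ) * ENNReal.ofReal (2 ^ N))
        * ∫⁻ y, F y * ENNReal.ofReal (wt (q + 2) y)) := by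
  have := hμ.fin
  set H : Rn N → ℝ≥0∞ := fun y => F y * ENNReal.ofReal (wt (q + 2) y) with hH
  have mH : Measurable H := by fun_prop
  have c1 := angular_const_le hμ hβ e (1/2) (1/2) (by norm_num) (by
    intro s hs hb
    have := norm_half_add he hs
    have := hpos _ hb
    nlinarith [norm_nonneg ((1/2 : ℝ) • e + (1/2 : ℝ) • s)])
  have c2 : (((1/2 : ℝ) ^ N)⁻¹) = 2 ^ N := by rw [one_div, inv_pow, inv_inv]
  rw [c2] at c1
  have c3 := lintegral_sV hμ hβ mH e he v
  have mβ : Measurable fun p : Rn N × Rn N => β (⟪p.2, p.1⟫ / ‖p.1‖) := by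
    apply hβ.comp; fun_prop
  have mi : Measurable fun p : Rn N × Rn N => β (⟪p.2, p.1⟫ / ‖p.1‖) * H (sV v p.1 p.2) := by
    fun_prop
  calc gainO μ (kin C γ) β G F v
      ≤ ∫⁻ z, ∫⁻ σ, ENNReal.ofReal (C * K * wt (γ - q) v)
          * (β (⟪σ, z⟫ / ‖z‖) * H (sV v z σ)) ∂μ := by
        unfold gainO
        refine lintegral_mono fun z => lintegral_mono_ae ?_
        filter_upwards [hμ.norm] with σ hσ
        have r1 : wt γ z * wt (-q) (pV v z σ) ≤ wt (γ - q) v * wt (q + 2) (sV v z σ) := by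
          have p1 := wt_peetre (norm_le_z_sV v z hσ) (a := -γ) (by linarith [hγ.2])
          have p2 := wt_peetre (norm_le_pV_sV v z hσ) hq.le
          rw [neg_neg] at p1
          calc wt γ z * wt (-q) (pV v z σ)
              ≤ (wt γ v * wt (-γ) (sV v z σ)) * (wt (-q) v * wt q (sV v z σ)) :=
                mul_le_mul p1 p2 (wt_pos _ _).le (mul_pos (wt_pos _ _) (wt_pos _ _)).le
            _ = wt (γ - q) v * wt (-γ + q) (sV v z σ) := by
                rw [sub_eq_add_neg, wt_add, wt_add]; ring
            _ ≤ _ := by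
                gcongr
                · exact (wt_pos _ _).le
                · exact wt_mono (by linarith [hγ.1]) _
        calc kin C γ z * (β (⟪σ, z⟫ / ‖z‖) * (G (pV v z σ) * F (sV v z σ)))
            ≤ kin C γ z * (β (⟪σ, z⟫ / ‖z‖) *
                (ENNReal.ofReal (K * wt (-q) (pV v z σ)) * F (sV v z σ))) := by
              gcongr; exact hG _
          _ = (kin C γ z * ENNReal.ofReal (K * wt (-q) (pV v z σ))) *
                (β (⟪σ, z⟫ / ‖z‖) * F (sV v z σ)) := by ring
          _ ≤ ENNReal.ofReal (C * K * wt (γ - q) v * wt (q + 2) (sV v z σ)) *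
                (β (⟪σ, z⟫ / ‖z‖) * F (sV v z σ)) := by
              gcongr
              unfold kin
              rw [← ENNReal.ofReal_mul (mul_nonneg hC (wt_pos _ _).le)]
              apply ENNReal.ofReal_le_ofReal
              have := mul_le_mul_of_nonneg_left r1 (mul_nonneg hC hK)
              nlinarith
          _ = _ := by
              rw [ENNReal.ofReal_mul (mul_nonneg (mul_nonneg hC hK) (wt_pos _ _).le)]
              simp only [hH]
              ring
    _ = ENNReal.ofReal (C * K * wt (γ - q) v) *
          ∫⁻ z, ∫⁻ σ, (β (⟪σ, z⟫ / ‖z‖) * H (sV v z σ)) ∂μ := by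
        rw [← lintegral_const_mul _ mi.lintegral_prod_right']
        refine lintegral_congr fun z => ?_
        have mi' : Measurable fun σ : Rn N => β (⟪σ, z⟫ / ‖z‖) * H (sV v z σ) := by fun_prop
        rw [← lintegral_const_mul _ mi']
    _ ≤ _ := by
        rw [c3]
        gcongr

/-- Part of the gain with bounded, non-grazing angular kernel: both changes of variables are
nondegenerate and a weighted `L²` bound suffices. -/
lemma gain_bounded {G : Rn N → ℝ≥0∞} (hG : Measurable G) {r M : ℝ} (hr : 0 < r) (hr1 : r ≤ 1/2)
    (hpos : ∀ x, β x ≠ 0 → 0 ≤ x ∧ 2 * r ^ 2 ≤ 1 - x) (hM : ∀ x, β x ≤ ENNReal.ofReal M)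
    (v : Rn N) :
    gainO μ (kin C γ) β G G v ≤ ENNReal.ofReal (C * wt (γ - q) v) *
      (2 * ((ENNReal.ofReal M * μ Set.univ) * ENNReal.ofReal ((r ^ N)⁻¹))
        * ∫⁻ y, G y ^ 2 * ENNReal.ofReal (wt (2 * (q + 2)) y)) := by
  have := hμ.fin
  set H : Rn N → ℝ≥0∞ := fun y => G y ^ 2 * ENNReal.ofReal (wt (2 * (q + 2)) y) with hH
  have mH : Measurable H := by fun_prop
  have c0 : ∫⁻ s, β ⟪s, e⟫ ∂μ ≤ ENNReal.ofReal M * μ Set.univ :=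
    (lintegral_mono fun s => hM _).trans (lintegral_const _).le
  have c1 := angular_const_le hμ hβ e (1/2) r hr (by
    intro s hs hb
    have := norm_half_add he hs
    have := (hpos _ hb).1
    nlinarith [norm_nonneg ((1/2 : ℝ) • e + (1/2 : ℝ) • s)])
  have c1' := angular_const_le hμ hβ e (-(1/2)) r hr (by
    intro s hs hb
    have := norm_half_sub he hs
    have := (hpos _ hb).2
    refine abs_le_of_sq_le_sq' ?_ (norm_nonneg _) |>.2
    linarith)
  have c3 := lintegral_sV hμ hβ mH e he v
  have c3' := lintegral_pV hμ hβ mH e he v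
  have mβ : Measurable fun p : Rn N × Rn N => β (⟪p.2, p.1⟫ / ‖p.1‖) := by
    apply hβ.comp; fun_prop
  have mi1 : Measurable fun p : Rn N × Rn N => β (⟪p.2, p.1⟫ / ‖p.1‖) * H (pV v p.1 p.2) := by
    fun_prop
  have mi : Measurable fun p : Rn N × Rn N => β (⟪p.2, p.1⟫ / ‖p.1‖) * H (pV v p.1 p.2)
      + β (⟪p.2, p.1⟫ / ‖p.1‖) * H (sV v p.1 p.2) := by
    fun_prop
  calc gainO μ (kin C γ) β G G v
      ≤ ∫⁻ z, ∫⁻ σ, ENNReal.ofReal (C * wt (γ - q) v)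
          * (β (⟪σ, z⟫ / ‖z‖) * H (pV v z σ) + β (⟪σ, z⟫ / ‖z‖) * H (sV v z σ)) ∂μ := by
        unfold gainO
        refine lintegral_mono fun z => lintegral_mono_ae ?_
        filter_upwards [hμ.norm] with σ hσ
        set a := wt (q + 2) (pV v z σ) with ha
        set b := wt (q + 2) (sV v z σ) with hb
        have ha0 : 0 < a := wt_pos _ _
        have hb0 : 0 < b := wt_pos _ _
        have r1 : wt γ z ≤ wt (γ - q) v * (a * b) := by
          have p2 := wt_peetre (norm_le_pV_sV v z hσ) (a := q + 2) (by linarith)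
          have p3 : wt (-(q + 2)) (pV v z σ) * a = 1 := by
            rw [ha, ← wt_add]; simp [wt]
          have p4 : wt γ z ≤ 1 := by
            have := wt_mono hγ.2 z
            simpa [wt] using this
          have p5 : wt (-(q + 2)) v ≤ wt (γ - q) v := wt_mono (by linarith [hγ.1]) _
          calc wt γ z ≤ wt (-(q + 2)) (pV v z σ) * a := by rw [p3]; exact p4
            _ ≤ (wt (-(q + 2)) v * b) * a := by gcongr
            _ ≤ (wt (γ - q) v * b) * a := by gcongr
            _ = _ := by ring
        have e1 : H (pV v z σ) = (G (pV v z σ) * ENNReal.ofReal a) ^ 2 := by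
          simp only [hH]
          rw [mul_pow, ← ENNReal.ofReal_pow ha0.le, sq a, ha, ← wt_add, two_mul]
        have e2 : H (sV v z σ) = (G (sV v z σ) * ENNReal.ofReal b) ^ 2 := by
          simp only [hH]
          rw [mul_pow, ← ENNReal.ofReal_pow hb0.le, sq b, hb, ← wt_add, two_mul]
        calc kin C γ z * (β (⟪σ, z⟫ / ‖z‖) * (G (pV v z σ) * G (sV v z σ)))
            ≤ ENNReal.ofReal (C * wt (γ - q) v * (a * b)) *
                (β (⟪σ, z⟫ / ‖z‖) * (G (pV v z σ) * G (sV v z σ))) := by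
              gcongr
              unfold kin
              apply ENNReal.ofReal_le_ofReal
              rw [mul_assoc]
              gcongr
          _ = ENNReal.ofReal (C * wt (γ - q) v) * (β (⟪σ, z⟫ / ‖z‖) *
                ((G (pV v z σ) * ENNReal.ofReal a) * (G (sV v z σ) * ENNReal.ofReal b))) := by
              rw [ENNReal.ofReal_mul (mul_nonneg hC (wt_pos _ _).le), ENNReal.ofReal_mul ha0.le]
              ring
          _ ≤ _ := by
              rw [← mul_add, e1, e2]
              gcongr
              exact enn_mul_le_sq_add _ _
    _ = ENNReal.ofReal (C * wt (γ - q) v) *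
          ((∫⁻ z, ∫⁻ σ, (β (⟪σ, z⟫ / ‖z‖) * H (pV v z σ)) ∂μ) +
            ∫⁻ z, ∫⁻ σ, (β (⟪σ, z⟫ / ‖z‖) * H (sV v z σ)) ∂μ) := by
        rw [← lintegral_add_left mi1.lintegral_prod_right']
        have e0 : ∀ z : Rn N, ∫⁻ σ, (β (⟪σ, z⟫ / ‖z‖) * H (pV v z σ)) ∂μ +
            ∫⁻ σ, (β (⟪σ, z⟫ / ‖z‖) * H (sV v z σ)) ∂μ
            = ∫⁻ σ, (β (⟪σ, z⟫ / ‖z‖) * H (pV v z σ) + β (⟪σ, z⟫ / ‖z‖) * H (sV v z σ)) ∂μ := by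
          intro z
          have mi' : Measurable fun σ : Rn N => β (⟪σ, z⟫ / ‖z‖) * H (pV v z σ) := by fun_prop
          rw [← lintegral_add_left mi']
        simp only [e0]
        rw [← lintegral_const_mul _ mi.lintegral_prod_right']
        refine lintegral_congr fun z => ?_
        have mi' : Measurable fun σ : Rn N => β (⟪σ, z⟫ / ‖z‖) * H (pV v z σ)
          + β (⟪σ, z⟫ / ‖z‖) * H (sV v z σ) := by fun_prop
        rw [← lintegral_const_mul _ mi']
    _ ≤ _ := by
        rw [c3, c3', ← add_mul, two_mul]
        gcongr
        · exact c1'.trans (by gcongr)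
        · exact c1.trans (by gcongr)

end

/-- Pointwise form of the fact that the squared weighted `L²` norm of the truncation grows only like
the square root of the truncation level. -/
lemma trunc_sq_le {f g κ a : ℝ} (hg : 0 ≤ g) (ha : 0 ≤ a) (hκ : 0 ≤ κ) (hgf : g ≤ f)
    (hgκ : g ≤ κ ^ 2) : g ^ 2 * a ≤ κ * (f ^ 2 + f * a ^ 2) := by
  set h := √g with hh
  have h0 : 0 ≤ h := Real.sqrt_nonneg _
  have hsq : h ^ 2 = g := Real.sq_sqrt hg
  have hκ' : h ≤ κ := by rw [hh, Real.sqrt_le_left hκ]; exact hgκ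
  have hf : 0 ≤ f := hg.trans hgf
  calc g ^ 2 * a = h * (h ^ 3 * a) := by rw [← hsq]; ring
    _ ≤ κ * (h ^ 3 * a) := by gcongr
    _ ≤ κ * (g ^ 2 + g * a ^ 2) := by
        gcongr
        rw [← hsq]
        nlinarith [sq_nonneg (h ^ 2 - h * a), sq_nonneg (h ^ 2), sq_nonneg (h * a)]
    _ ≤ κ * (f ^ 2 + f * a ^ 2) := by gcongr

/-! ### Gain bound relative to a barrier -/

/-- The angular kernel folded onto the half-sphere `cos θ ≥ 0`. -/
def symK (β : ℝ → ℝ≥0∞) (x : ℝ) : ℝ≥0∞ := if 0 ≤ x then β x + β (-x) else 0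

lemma measurable_symK {β : ℝ → ℝ≥0∞} (hβ : Measurable β) : Measurable (symK β) := by
  unfold symK
  exact Measurable.ite measurableSet_Ici (by fun_prop) measurable_const

/-- The part of `F` above the barrier `K (1+|y|)^{-q}`. -/
def excess {N : ℕ} (q K : ℝ) (F : Rn N → ℝ≥0∞) (y : Rn N) : ℝ≥0∞ :=
  F y - ENNReal.ofReal (K * wt (-q) y)

lemma measurable_excess {N : ℕ} (q K : ℝ) {F : Rn N → ℝ≥0∞} (hF : Measurable F) :
    Measurable (excess q K F) := by
  unfold excess; fun_prop

/-- The part of the gain term involving the excess over the barrier; bilinear in the excess and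
the solution, with bounded kinetic factor. -/
def defect {N : ℕ} (μ : Measure (Rn N)) (C : ℝ) (β : ℝ → ℝ≥0∞) (q K : ℝ) (F : Rn N → ℝ≥0∞)
    (v : Rn N) : ℝ≥0∞ :=
  ENNReal.ofReal C * (gainO μ (fun _ => 1) β (excess q K F) F v
    + gainO μ (fun _ => 1) β F (excess q K F) v)

lemma lintegral_combine {X Y : Type*} [MeasurableSpace X] [MeasurableSpace Y] {ν : Measure X}
    {μ : Measure Y} [SFinite μ] {f g h k : X × Y → ℝ≥0∞} (hf : Measurable f) (hg : Measurable g)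
    (hh : Measurable h) (hk : Measurable k) (c : ℝ≥0∞) :
    ∫⁻ x, ∫⁻ y, ((f (x, y) + g (x, y)) + c * (h (x, y) + k (x, y))) ∂μ ∂ν
      = ((∫⁻ x, ∫⁻ y, f (x, y) ∂μ ∂ν) + ∫⁻ x, ∫⁻ y, g (x, y) ∂μ ∂ν)
        + c * ((∫⁻ x, ∫⁻ y, h (x, y) ∂μ ∂ν) + ∫⁻ x, ∫⁻ y, k (x, y) ∂μ ∂ν) := by
  have key : ∀ {Z : Type _} [MeasurableSpace Z] {ρ : Measure Z} {a b d e : Z → ℝ≥0∞},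
      Measurable a → Measurable b → Measurable d → Measurable e →
      ∫⁻ x, ((a x + b x) + c * (d x + e x)) ∂ρ
        = ((∫⁻ x, a x ∂ρ) + ∫⁻ x, b x ∂ρ) + c * ((∫⁻ x, d x ∂ρ) + ∫⁻ x, e x ∂ρ) := by
    intro Z _ ρ a b d e ha hb hd he
    have m1 : Measurable fun x => a x + b x := by fun_prop
    have m2 : Measurable fun x => d x + e x := by fun_prop
    rw [lintegral_add_left m1, lintegral_add_left ha, lintegral_const_mul _ m2,
      lintegral_add_left hd]
  rw [← key hf.lintegral_prod_right' hg.lintegral_prod_right' hh.lintegral_prod_right'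
    hk.lintegral_prod_right']
  refine lintegral_congr fun x => ?_
  have p : Measurable fun y : Y => (x, y) := by fun_prop
  have := lintegral_add_left (μ := μ) ((hf.comp p).add (hg.comp p))
    (fun y => c * (h (x, y) + k (x, y)))
  refine this.trans ?_
  have m2 : Measurable fun y => h (x, y) + k (x, y) := by fun_prop
  have m3 : Measurable fun y => f (x, y) := by fun_prop
  have m4 : Measurable fun y => h (x, y) := by fun_prop
  rw [lintegral_const_mul _ m2, lintegral_add_left m4, ← lintegral_add_left m3]
  rfl

section
variable {N : ℕ} {μ : Measure (Rn N)} (hμ : AngMeas μ) {β : ℝ → ℝ≥0∞} (hβ : Measurable β)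
include hμ hβ

omit hμ in
lemma measurable_gain_integrand {k : Rn N → ℝ≥0∞} (hk : Measurable k)
    {A B : Rn N → ℝ≥0∞} (hA : Measurable A) (hB : Measurable B) (v : Rn N) :
    Measurable fun p : Rn N × Rn N =>
      k p.1 * (β (⟪p.2, p.1⟫ / ‖p.1‖) * (A (pV v p.1 p.2) * B (sV v p.1 p.2))) := by
  have mβ : Measurable fun p : Rn N × Rn N => β (⟪p.2, p.1⟫ / ‖p.1‖) := by
    apply hβ.comp; fun_prop
  fun_prop

/-- Exchanging the two post-collisional velocities folds the kernel. -/
lemma gain_sym {k : Rn N → ℝ≥0∞} (hk : Measurable k) {F : Rn N → ℝ≥0∞} (hF : Measurable F)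
    (v : Rn N) : gainO μ k β F F v ≤ gainO μ k (symK β) F F v := by
  have := hμ.fin
  unfold gainO
  refine lintegral_mono fun z => ?_
  set b1 : ℝ → ℝ≥0∞ := fun x => if 0 ≤ x then β x else 0 with hb1
  set b2 : ℝ → ℝ≥0∞ := fun x => if 0 ≤ x then 0 else β x with hb2
  have m1 : Measurable b1 := Measurable.ite measurableSet_Ici hβ measurable_const
  have m2 : Measurable b2 := Measurable.ite measurableSet_Ici measurable_const hβ
  have hsplit : ∀ x, β x = b1 x + b2 x := by
    intro x; simp only [hb1, hb2]; split_ifs <;> simp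
  have i1 : Measurable fun σ : Rn N =>
      k z * (b1 (⟪σ, z⟫ / ‖z‖) * (F (pV v z σ) * F (sV v z σ))) :=
    (measurable_gain_integrand m1 hk hF hF v).comp (by fun_prop : Measurable fun σ => (z, σ))
  have i2 : Measurable fun σ : Rn N =>
      k z * (b2 (⟪σ, z⟫ / ‖z‖) * (F (pV v z σ) * F (sV v z σ))) :=
    (measurable_gain_integrand m2 hk hF hF v).comp (by fun_prop : Measurable fun σ => (z, σ))
  have hneg : ∫⁻ σ, k z * (b2 (⟪σ, z⟫ / ‖z‖) * (F (pV v z σ) * F (sV v z σ))) ∂μ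
      = ∫⁻ σ, k z * (b2 (-(⟪σ, z⟫ / ‖z‖)) * (F (pV v z σ) * F (sV v z σ))) ∂μ := by
    refine ((hμ.inv (LinearIsometryEquiv.neg ℝ)).lintegral_comp i2).symm.trans
      (lintegral_congr fun σ => ?_)
    have e1 : pV v z (-σ) = sV v z σ := by unfold pV sV; module
    have e2 : sV v z (-σ) = pV v z σ := by unfold pV sV; module
    simp only [LinearIsometryEquiv.coe_neg, inner_neg_left, e1, e2, neg_div]
    ring
  calc ∫⁻ σ, k z * (β (⟪σ, z⟫ / ‖z‖) * (F (pV v z σ) * F (sV v z σ))) ∂μ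
      = ∫⁻ σ, k z * (b1 (⟪σ, z⟫ / ‖z‖) * (F (pV v z σ) * F (sV v z σ))) ∂μ
        + ∫⁻ σ, k z * (b2 (⟪σ, z⟫ / ‖z‖) * (F (pV v z σ) * F (sV v z σ))) ∂μ := by
        rw [← lintegral_add_left i1]
        refine lintegral_congr fun σ => ?_
        rw [hsplit]; ring
    _ = ∫⁻ σ, k z * ((b1 (⟪σ, z⟫ / ‖z‖) + b2 (-(⟪σ, z⟫ / ‖z‖)))
          * (F (pV v z σ) * F (sV v z σ))) ∂μ := by
        rw [hneg, ← lintegral_add_left i1]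
        refine lintegral_congr fun σ => ?_
        ring
    _ ≤ _ := by
        gcongr with σ
        generalize ⟪σ, z⟫ / ‖z‖ = x
        simp only [hb1, hb2, symK]
        split_ifs with h1 h2 h2
        · simp
        · exact le_rfl
        · simp
        · exfalso; push Not at h1 h2; linarith

lemma symK_lintegral (e : Rn N) :
    ∫⁻ s, symK β ⟪s, e⟫ ∂μ ≤ 2 * ∫⁻ s, β ⟪s, e⟫ ∂μ := by
  have mβ : Measurable fun s : Rn N => β ⟪s, e⟫ := by apply hβ.comp; fun_prop
  have h : ∫⁻ s, β (-⟪s, e⟫) ∂μ = ∫⁻ s, β ⟪s, e⟫ ∂μ := by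
    refine Eq.trans (lintegral_congr fun s => ?_)
      ((hμ.inv (LinearIsometryEquiv.neg ℝ)).lintegral_comp mβ)
    simp
  calc ∫⁻ s, symK β ⟪s, e⟫ ∂μ ≤ ∫⁻ s, (β ⟪s, e⟫ + β (-⟪s, e⟫)) ∂μ := by
        refine lintegral_mono fun s => ?_
        unfold symK; split_ifs <;> simp
    _ = _ := by rw [lintegral_add_left mβ, h, two_mul]

/-- The kernel with the part `{x ≤ 1 - 1/(n+1), β ≤ n}` removed has small angular integral for large
`n`: only `σ = e`, a null set, is never reached. -/
lemma grazing_tendsto (e : Rn N) (he : ‖e‖ = 1) (hfin : ∀ x, β x ≠ ⊤)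
    (hint : ∫⁻ s, β ⟪s, e⟫ ∂μ ≠ ⊤) :
    Filter.Tendsto (fun n : ℕ => ∫⁻ s, (fun x => if x ≤ 1 - 1 / ((n : ℝ) + 1) ∧
      β x ≤ ENNReal.ofReal n then 0 else β x) ⟪s, e⟫ ∂μ) Filter.atTop (nhds 0) := by
  have mβ : Measurable fun s : Rn N => β ⟪s, e⟫ := by apply hβ.comp; fun_prop
  have key := tendsto_lintegral_of_dominated_convergence (μ := μ)
    (F := fun (n : ℕ) s => (fun x => if x ≤ 1 - 1 / ((n : ℝ) + 1) ∧
      β x ≤ ENNReal.ofReal n then 0 else β x) ⟪s, e⟫) (f := fun _ => 0)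
    (fun s => β ⟪s, e⟫) ?_ ?_ hint ?_
  · simpa using key
  · intro n
    have m : Measurable fun x : ℝ => if x ≤ 1 - 1 / ((n : ℝ) + 1) ∧
      β x ≤ ENNReal.ofReal n then 0 else β x := by
      exact Measurable.ite (measurableSet_Iic.inter (measurableSet_le hβ measurable_const))
        measurable_const hβ
    exact m.comp (by fun_prop : Measurable fun s : Rn N => ⟪s, e⟫)
  · intro n
    refine Filter.Eventually.of_forall fun s => ?_
    dsimp only
    split_ifs <;> simp
  · filter_upwards [hμ.norm, hμ.ne e] with s hs hse
    have hlt : ⟪s, e⟫ < 1 := by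
      refine lt_of_le_of_ne ?_ ?_
      · have := real_inner_le_norm s e; rwa [hs, he, one_mul] at this
      · intro h; exact hse ((inner_eq_one_iff_of_norm_eq_one hs he).1 h)
    apply tendsto_const_nhds.congr'
    have t1 := tendsto_one_div_add_atTop_nhds_zero_nat (𝕜 := ℝ)
    have ev1 : ∀ᶠ n : ℕ in Filter.atTop, 1 / ((n : ℝ) + 1) < 1 - ⟪s, e⟫ :=
      t1.eventually_lt_const (by linarith)
    have ev2 : ∀ᶠ n : ℕ in Filter.atTop, (β ⟪s, e⟫).toReal ≤ n :=
      tendsto_natCast_atTop_atTop.eventually_ge_atTop _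
    filter_upwards [ev1, ev2] with n h1 h2
    rw [if_pos]
    refine ⟨by linarith, ?_⟩
    rw [← ENNReal.ofReal_toReal (hfin ⟪s, e⟫)]
    exact ENNReal.ofReal_le_ofReal h2

/-- If the barrier is high enough, the gain term is controlled by a small multiple of the barrier
(times the growth of the loss rate), up to the contribution of the excess over the barrier. -/
lemma gain_bound (e : Rn N) (he : ‖e‖ = 1) {C γ q ν : ℝ} (hC : 0 ≤ C)
    (hγ : γ ∈ Set.Ioc (-2 : ℝ) 0) (hq : 0 < q) (hν : 0 < ν) (hfin : ∀ x, β x ≠ ⊤)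
    (hint : ∫⁻ s, β ⟪s, e⟫ ∂μ ≠ ⊤) {A1 A2 : ℝ≥0∞} (hA1 : A1 ≠ ⊤) (hA2 : A2 ≠ ⊤) :
    ∃ κ₀ : ℝ, 0 < κ₀ ∧ ∀ κ : ℝ, κ₀ ≤ κ → ∀ F : Rn N → ℝ≥0∞, Measurable F → (∀ y, F y ≠ ⊤) →
      ∫⁻ y, F y * ENNReal.ofReal (wt (4 * (q + 2)) y) ≤ A1 → ∫⁻ y, F y ^ 2 ≤ A2 → ∀ v,
        gainO μ (kin C γ) β F F v ≤ ENNReal.ofReal (ν * κ ^ 2 * wt (γ - q) v)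
          + defect μ C (symK β) q (κ ^ 2) F v := by
  have := hμ.fin
  have mS := measurable_symK hβ
  have hSfin : ∀ x, symK β x ≠ ⊤ := by
    intro x; unfold symK; split_ifs
    · simp [hfin]
    · simp
  have hSint : ∫⁻ s, symK β ⟪s, e⟫ ∂μ ≠ ⊤ :=
    ne_top_of_le_ne_top (by finiteness) (symK_lintegral hμ hβ e)
  have hn : ∃ n : ℕ, ENNReal.ofReal C * ENNReal.ofReal (2 ^ N) * A1 *
      ∫⁻ s, (fun x => if x ≤ 1 - 1 / ((n : ℝ) + 1) ∧
      symK β x ≤ ENNReal.ofReal n then 0 else symK β x) ⟪s, e⟫ ∂μ ≤ ENNReal.ofReal (ν / 2) := by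
    have t := ENNReal.Tendsto.const_mul (a := ENNReal.ofReal C * ENNReal.ofReal (2 ^ N) * A1)
      (grazing_tendsto hμ mS e he hSfin hSint) (Or.inr (by finiteness))
    rw [mul_zero] at t
    have hpos : (0 : ℝ≥0∞) < ENNReal.ofReal (ν / 2) := by simpa using hν
    exact ((t.eventually_lt_const hpos).exists).imp fun n h => h.le
  obtain ⟨n, hn⟩ := hn
  set bs : ℝ → ℝ≥0∞ := fun x => if x ≤ 1 - 1 / ((n : ℝ) + 1) ∧
      symK β x ≤ ENNReal.ofReal n then 0 else symK β x with hbs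
  set bb : ℝ → ℝ≥0∞ := fun x => if x ≤ 1 - 1 / ((n : ℝ) + 1) ∧
      symK β x ≤ ENNReal.ofReal n then symK β x else 0 with hbb
  have mset : MeasurableSet {x : ℝ | x ≤ 1 - 1 / ((n : ℝ) + 1) ∧ symK β x ≤ ENNReal.ofReal n} :=
    measurableSet_Iic.inter (measurableSet_le mS measurable_const)
  have mbs : Measurable bs := Measurable.ite mset measurable_const mS
  have mbb : Measurable bb := Measurable.ite mset mS measurable_const
  have hsplit : ∀ x, symK β x = bs x + bb x := by
    intro x; simp only [hbs, hbb]; split_ifs <;> simp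
  have hS0 : ∀ x, symK β x ≠ 0 → 0 ≤ x := by
    intro x hx; by_contra h; exact hx (if_neg h)
  set r : ℝ := 1 / (2 * ((n : ℝ) + 1)) with hr
  have hn1 : (1 : ℝ) ≤ (n : ℝ) + 1 := by simp
  have hr0 : 0 < r := by positivity
  have hr1 : r ≤ 1 / 2 := by
    rw [hr, div_le_div_iff₀ (by positivity) (by norm_num)]; linarith
  set X : ℝ≥0∞ := ENNReal.ofReal C *
    (2 * ((ENNReal.ofReal n * μ Set.univ) * ENNReal.ofReal ((r ^ N)⁻¹))) * (A2 + A1) with hX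
  have hXt : X ≠ ⊤ := by
    have := measure_ne_top μ Set.univ
    rw [hX]; finiteness
  -- the bounded part is at most `κ X (1+|v|)^{γ-q}`, which is below `(ν/2) κ²` once `κ ≥ 2 X / ν`
  refine ⟨2 * X.toReal / ν + 1, by positivity, ?_⟩
  intro κ hκ F hF hFt hF1 hF2 v
  have hκ0 : 0 < κ := lt_of_lt_of_le (by positivity) hκ
  have hXκ : X ≤ ENNReal.ofReal (κ * (ν / 2)) := by
    rw [← ENNReal.ofReal_toReal hXt]
    apply ENNReal.ofReal_le_ofReal
    have : 2 * X.toReal / ν ≤ κ := by linarith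
    rw [div_le_iff₀ hν] at this
    linarith
  set U := excess q (κ ^ 2) F with hU
  set G : Rn N → ℝ≥0∞ := fun y => min (F y) (ENNReal.ofReal (κ ^ 2 * wt (-q) y)) with hG
  have mU : Measurable U := measurable_excess _ _ hF
  have mG : Measurable G := hF.min (by fun_prop)
  have hFU : ∀ y, F y = U y + G y := fun y => (tsub_add_min).symm
  have hF1' : ∫⁻ y, F y * ENNReal.ofReal (wt (q + 2) y) ≤ A1 := by
    refine le_trans (lintegral_mono fun y => ?_) hF1
    gcongr
    exact wt_mono (by linarith) _
  have hG2 : ∫⁻ y, G y ^ 2 * ENNReal.ofReal (wt (2 * (q + 2)) y)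
      ≤ ENNReal.ofReal κ * (A2 + A1) := by
    calc ∫⁻ y, G y ^ 2 * ENNReal.ofReal (wt (2 * (q + 2)) y)
        ≤ ∫⁻ y, ENNReal.ofReal κ * (F y ^ 2 + F y * ENNReal.ofReal (wt (4 * (q + 2)) y)) := by
          refine lintegral_mono fun y => ?_
          set f := (F y).toReal with hf
          have hFf : F y = ENNReal.ofReal f := (ENNReal.ofReal_toReal (hFt y)).symm
          have hf0 : 0 ≤ f := ENNReal.toReal_nonneg
          have hw := wt_pos (2 * (q + 2)) y
          have hψ : wt (-q) y ≤ 1 := by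
            have := wt_mono (by linarith : -q ≤ 0) y
            simpa [wt] using this
          have hψ0 := wt_pos (-q) y
          have hw2 : wt (4 * (q + 2)) y = wt (2 * (q + 2)) y ^ 2 := by
            rw [sq, ← wt_add]; congr 1; ring
          have hg0 : 0 ≤ min f (κ ^ 2 * wt (-q) y) := le_min hf0 (by positivity)
          have := trunc_sq_le hg0 hw.le hκ0.le (min_le_left _ _)
            ((min_le_right f (κ ^ 2 * wt (-q) y)).trans
              (mul_le_of_le_one_right (by positivity) hψ))
          simp only [hG, hFf]
          rw [← ENNReal.ofReal_min, hw2, ← ENNReal.ofReal_pow hg0, ← ENNReal.ofReal_pow hf0,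
            ← ENNReal.ofReal_mul (by positivity), ← ENNReal.ofReal_mul hf0,
            ← ENNReal.ofReal_add (by positivity) (by positivity), ← ENNReal.ofReal_mul hκ0.le]
          exact ENNReal.ofReal_le_ofReal this
      _ = ENNReal.ofReal κ * ((∫⁻ y, F y ^ 2)
            + ∫⁻ y, F y * ENNReal.ofReal (wt (4 * (q + 2)) y)) := by
          rw [lintegral_const_mul _ (by fun_prop), lintegral_add_left (by fun_prop)]
      _ ≤ _ := by gcongr
  have T1 := gain_grazing hμ mbs e he hC hγ hq hF (sq_nonneg κ) (G := G)
    (fun y => min_le_right _ _) (fun x hx => hS0 x fun h0 => hx (by simp [hbs, h0])) v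
  have T2 := gain_bounded hμ mbb e he hC hγ hq mG hr0 hr1 (M := n)
    (by
      intro x hx
      simp only [hbb] at hx
      have hx' : (x ≤ 1 - 1 / ((n : ℝ) + 1) ∧ symK β x ≤ ENNReal.ofReal n) := by
        by_contra h; exact hx (if_neg h)
      rw [if_pos hx'] at hx
      refine ⟨hS0 x hx, ?_⟩
      have h1 : 2 * r ^ 2 ≤ 1 / ((n : ℝ) + 1) := by
        have : (1 : ℝ) / ((n : ℝ) + 1) = 2 * r := by rw [hr]; field_simp
        rw [this]; nlinarith
      linarith [hx'.1])
    (by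
      intro x
      simp only [hbb]
      split_ifs with h
      · exact h.2
      · simp) v
  have B1 : gainO μ (kin C γ) bs G F v ≤ ENNReal.ofReal (ν / 2 * κ ^ 2 * wt (γ - q) v) := by
    refine T1.trans ?_
    have hw := wt_pos (γ - q) v
    calc _ ≤ ENNReal.ofReal (C * κ ^ 2 * wt (γ - q) v) *
          (((∫⁻ s, bs ⟪s, e⟫ ∂μ) * ENNReal.ofReal (2 ^ N)) * A1) := by gcongr
      _ = ENNReal.ofReal (κ ^ 2 * wt (γ - q) v) * (ENNReal.ofReal C * ENNReal.ofReal (2 ^ N) * A1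
          * ∫⁻ s, bs ⟪s, e⟫ ∂μ) := by
          rw [mul_assoc C, ENNReal.ofReal_mul hC]; ring
      _ ≤ ENNReal.ofReal (κ ^ 2 * wt (γ - q) v) * ENNReal.ofReal (ν / 2) := by gcongr
      _ = _ := by
          rw [← ENNReal.ofReal_mul (by positivity)]; congr 1; ring
  have B2 : gainO μ (kin C γ) bb G G v ≤ ENNReal.ofReal (ν / 2 * κ ^ 2 * wt (γ - q) v) := by
    refine T2.trans ?_
    have hw := wt_pos (γ - q) v
    calc _ ≤ ENNReal.ofReal (C * wt (γ - q) v) *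
          (2 * ((ENNReal.ofReal n * μ Set.univ) * ENNReal.ofReal ((r ^ N)⁻¹))
            * (ENNReal.ofReal κ * (A2 + A1))) := by gcongr
      _ = ENNReal.ofReal (κ * wt (γ - q) v) * X := by
          rw [ENNReal.ofReal_mul hC, ENNReal.ofReal_mul hκ0.le, hX]; ring
      _ ≤ ENNReal.ofReal (κ * wt (γ - q) v) * ENNReal.ofReal (κ * (ν / 2)) := by gcongr
      _ = _ := by
          rw [← ENNReal.ofReal_mul (by positivity)]; congr 1; ring
  have mk : Measurable (kin (N := N) C γ) := by fun_prop
  calc gainO μ (kin C γ) β F F v ≤ gainO μ (kin C γ) (symK β) F F v := gain_sym hμ hβ mk hF v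
    _ ≤ ∫⁻ z, ∫⁻ σ, ((kin C γ z * (bs (⟪σ, z⟫ / ‖z‖) * (G (pV v z σ) * F (sV v z σ))) +
          kin C γ z * (bb (⟪σ, z⟫ / ‖z‖) * (G (pV v z σ) * G (sV v z σ)))) +
          ENNReal.ofReal C * (1 * (symK β (⟪σ, z⟫ / ‖z‖) * (U (pV v z σ) * F (sV v z σ))) +
          1 * (symK β (⟪σ, z⟫ / ‖z‖) * (F (pV v z σ) * U (sV v z σ))))) ∂μ := by
        unfold gainO
        refine lintegral_mono fun z => lintegral_mono fun σ => ?_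
        have hk : kin C γ z ≤ ENNReal.ofReal C := by
          unfold kin
          apply ENNReal.ofReal_le_ofReal
          refine mul_le_of_le_one_right hC ?_
          have := wt_mono hγ.2 z
          simpa [wt] using this
        have hGF : ∀ y, G y ≤ F y := fun y => min_le_left _ _
        have h1 := hsplit (⟪σ, z⟫ / ‖z‖)
        generalize ⟪σ, z⟫ / ‖z‖ = x at h1 ⊢
        have hbx : bb x ≤ symK β x := by rw [h1]; exact le_add_self
        calc kin C γ z * (symK β x * (F (pV v z σ) * F (sV v z σ)))
            = kin C γ z * (bs x * (G (pV v z σ) * F (sV v z σ))) +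
              kin C γ z * (bb x * (G (pV v z σ) * G (sV v z σ))) +
              (kin C γ z * (symK β x * (U (pV v z σ) * F (sV v z σ))) +
              kin C γ z * (bb x * (G (pV v z σ) * U (sV v z σ)))) := by
              have e1 : symK β x * (F (pV v z σ) * F (sV v z σ))
                  = symK β x * (U (pV v z σ) * F (sV v z σ))
                    + (bs x * (G (pV v z σ) * F (sV v z σ))
                    + bb x * (G (pV v z σ) * (U (sV v z σ) + G (sV v z σ)))) := by
                conv_lhs => rw [hFU (pV v z σ)]
                rw [← hFU (sV v z σ), add_mul, mul_add, h1]
                ring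
              rw [e1]; ring
          _ ≤ _ := by
              rw [mul_add (ENNReal.ofReal C)]
              simp only [one_mul]
              gcongr
              exact hGF _
    _ = (gainO μ (kin C γ) bs G F v + gainO μ (kin C γ) bb G G v)
          + defect μ C (symK β) q (κ ^ 2) F v := by
        have m1 := measurable_gain_integrand mbs mk mG hF v
        have m2 := measurable_gain_integrand mbb mk mG mG v
        have n1 := measurable_gain_integrand mS (k := fun _ => 1) measurable_const mU hF v
        have n2 := measurable_gain_integrand mS (k := fun _ => 1) measurable_const hF mU v
        exact lintegral_combine m1 m2 n1 n2 _
    _ ≤ (ENNReal.ofReal (ν / 2 * κ ^ 2 * wt (γ - q) v)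
          + ENNReal.ofReal (ν / 2 * κ ^ 2 * wt (γ - q) v))
          + defect μ C (symK β) q (κ ^ 2) F v := by gcongr
    _ = _ := by
        have hw := wt_pos (γ - q) v
        rw [← ENNReal.ofReal_add (by positivity) (by positivity)]
        congr 2; ring

/-- The `L¹` norm of the defect is a multiple of that of the excess. -/
lemma lintegral_defect (e : Rn N) (he : ‖e‖ = 1) (C q K : ℝ) {F : Rn N → ℝ≥0∞}
    (hF : Measurable F) :
    ∫⁻ v, defect μ C β q K F v
      = ENNReal.ofReal C * (2 * ((∫⁻ s, β ⟪s, e⟫ ∂μ) *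
        ((∫⁻ y, excess q K F y) * ∫⁻ y, F y))) := by
  have := hμ.fin
  have mU := measurable_excess q K hF
  have mβ : Measurable fun p : (Rn N × Rn N) × Rn N => β (⟪p.2, p.1.2⟫ / ‖p.1.2‖) := by
    apply hβ.comp; fun_prop
  have mg : ∀ A B : Rn N → ℝ≥0∞, Measurable A → Measurable B →
      Measurable (gainO μ (fun _ => 1) β A B) := by
    intro A B hA hB
    have m : Measurable fun p : (Rn N × Rn N) × Rn N =>
      (1 : ℝ≥0∞) * (β (⟪p.2, p.1.2⟫ / ‖p.1.2‖) *
        (A (pV p.1.1 p.1.2 p.2) * B (sV p.1.1 p.1.2 p.2))) := by fun_prop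
    exact m.lintegral_prod_right'.lintegral_prod_right'
  have h1 := lintegral_gain hμ hβ mU hF e he
  have h2 := lintegral_gain hμ hβ hF mU e he
  unfold defect
  have ms : Measurable fun v => gainO μ (fun _ => 1) β (excess q K F) F v
    + gainO μ (fun _ => 1) β F (excess q K F) v := (mg _ _ mU hF).add (mg _ _ hF mU)
  rw [lintegral_const_mul _ ms, lintegral_add_left (mg _ _ mU hF)]
  unfold gainO
  simp only [one_mul, h1, h2]
  ring

lemma defect_eq_zero (e : Rn N) (he : ‖e‖ = 1) (C q K : ℝ) {F : Rn N → ℝ≥0∞}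
    (hF : Measurable F) (h0 : excess q K F =ᵐ[volume] 0) (v : Rn N) :
    defect μ C β q K F v = 0 := by
  have mU := measurable_excess q K hF
  have h1 := gain_eq_zero_left hμ hβ mU (B := F) e he h0 v
  have h2 := gain_eq_zero_right hμ hβ (A := F) mU e he h0 v
  unfold defect gainO
  simp [h1, h2]

end

/-! ### Splitting the collision operator; scalar comparison -/

lemma vP_eq_pV (N : ℕ) (v w σ : Rn N) : vP N v w σ = pV v (v - w) σ := by
  unfold vP pV; module

lemma vSP_eq_sV (N : ℕ) (v w σ : Rn N) : vSP N v w σ = sV v (v - w) σ := by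
  unfold vSP sV; module

section
variable {N : ℕ} {μ : Measure (Rn N)} (hμ : AngMeas μ)
include hμ

/-- By rotation invariance, the angular integral does not depend on the direction. -/
lemma integral_angle {b : ℝ → ℝ} {e : Rn N} (he : ‖e‖ = 1)
    (hb : Integrable (fun σ : Rn N => b ⟪e, σ⟫) μ) {u : Rn N} (hu : ‖u‖ = 1) :
    Integrable (fun σ : Rn N => b ⟪u, σ⟫) μ ∧
      ∫ σ, b ⟪u, σ⟫ ∂μ = ∫ σ, b ⟪e, σ⟫ ∂μ := by
  obtain ⟨T, rfl⟩ := exists_isometry (he.trans hu.symm)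
  have emb : MeasurableEmbedding T := T.toHomeomorph.measurableEmbedding
  have h1 : (fun σ : Rn N => b ⟪T e, σ⟫) ∘ T = fun σ : Rn N => b ⟪e, σ⟫ := by
    funext σ; simp
  constructor
  · rw [← (hμ.inv T).integrable_comp_emb emb, h1]; exact hb
  · rw [← (hμ.inv T).integral_comp emb]; simp

/-- Splitting of the collision operator into gain and loss, at a point where the gain is finite. -/
lemma collision_eq {Φ b β : ℝ → ℝ} (hΦc : Continuous Φ) {C : ℝ}
    (hΦ : ∀ z : Rn N, 0 ≤ Φ ‖z‖ ∧ Φ ‖z‖ ≤ C) (hb0 : ∀ x, 0 ≤ b x) (hβ : Measurable β)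
    (hbβ : ∀ u : Rn N, ‖u‖ = 1 → ∀ᵐ σ ∂μ, b ⟪u, σ⟫ = β ⟪u, σ⟫) {e : Rn N} (he : ‖e‖ = 1)
    (hb : Integrable (fun σ : Rn N => b ⟪e, σ⟫) μ) {f : Rn N → ℝ} (hf0 : ∀ v, 0 ≤ f v)
    (hf : Measurable f) (hfi : Integrable f) (v : Rn N)
    (hg : gainO μ (fun z => ENNReal.ofReal (Φ ‖z‖)) (fun x => ENNReal.ofReal (β x))
      (fun y => ENNReal.ofReal (f y)) (fun y => ENNReal.ofReal (f y)) v ≠ ⊤) :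
    ∫ w : Rn N, ∫ σ : Rn N, Φ ‖v - w‖ * b (cosTheta N v w σ) *
      (f (vSP N v w σ) * f (vP N v w σ) - f w * f v) ∂μ
      = (gainO μ (fun z => ENNReal.ofReal (Φ ‖z‖)) (fun x => ENNReal.ofReal (β x))
          (fun y => ENNReal.ofReal (f y)) (fun y => ENNReal.ofReal (f y)) v).toReal
        - f v * ((∫ σ, b ⟪e, σ⟫ ∂μ) * ∫ w, Φ ‖v - w‖ * f w) := by
  have := hμ.fin
  have hΦm := hΦc.measurable
  set H : Rn N → ℝ≥0∞ := fun z => ∫⁻ σ, ENNReal.ofReal (Φ ‖z‖) *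
    (ENNReal.ofReal (β (⟪σ, z⟫ / ‖z‖)) *
      (ENNReal.ofReal (f (pV v z σ)) * ENNReal.ofReal (f (sV v z σ)))) ∂μ with hH
  have mβ : Measurable fun p : Rn N × Rn N => β (⟪p.2, p.1⟫ / ‖p.1‖) := by
    apply hβ.comp; fun_prop
  have mH2 : Measurable fun p : Rn N × Rn N => ENNReal.ofReal (Φ ‖p.1‖) *
    (ENNReal.ofReal (β (⟪p.2, p.1⟫ / ‖p.1‖)) *
      (ENNReal.ofReal (f (pV v p.1 p.2)) * ENNReal.ofReal (f (sV v p.1 p.2)))) := by fun_prop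
  have mH : Measurable H := mH2.lintegral_prod_right'
  have mHv : Measurable fun w => H (v - w) := by fun_prop
  have hgH : gainO μ (fun z => ENNReal.ofReal (Φ ‖z‖)) (fun x => ENNReal.ofReal (β x))
      (fun y => ENNReal.ofReal (f y)) (fun y => ENNReal.ofReal (f y)) v = ∫⁻ w, H (v - w) := by
    rw [lintegral_sub_left_eq_self]; rfl
  rw [hgH] at hg ⊢
  have hne : ∀ᵐ w : Rn N, w ≠ v := by
    have : Nontrivial (Rn N) := ⟨e, 0, by intro h0; simp [h0] at he⟩
    exact Measure.ae_ne volume v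
  have hfinw := ae_lt_top mHv hg
  have key : ∀ᵐ w : Rn N, ∫ σ : Rn N, Φ ‖v - w‖ * b (cosTheta N v w σ) *
      (f (vSP N v w σ) * f (vP N v w σ) - f w * f v) ∂μ
      = (H (v - w)).toReal - (f v * ∫ σ, b ⟪e, σ⟫ ∂μ) * (Φ ‖v - w‖ * f w) := by
    filter_upwards [hne, hfinw] with w hw hHw
    have hz : v - w ≠ 0 := sub_ne_zero.2 hw.symm
    set u : Rn N := ‖v - w‖⁻¹ • (v - w) with hu
    have hu1 : ‖u‖ = 1 := norm_smul_inv_norm hz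
    have hcos : ∀ σ, cosTheta N v w σ = ⟪u, σ⟫ := by
      intro σ
      rw [hu, inner_smul_left, real_inner_comm]
      unfold cosTheta
      simp [div_eq_inv_mul]
    obtain ⟨i1, i2⟩ := integral_angle hμ he hb hu1
    have hbb := hbβ u hu1
    have hae : ∀ᵐ σ ∂μ, Φ ‖v - w‖ * b ⟪u, σ⟫ * (f (sV v (v - w) σ) * f (pV v (v - w) σ))
        = Φ ‖v - w‖ * β ⟪u, σ⟫ * (f (sV v (v - w) σ) * f (pV v (v - w) σ)) := by
      filter_upwards [hbb] with σ hσ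
      rw [hσ]
    have mP : AEStronglyMeasurable (fun σ => Φ ‖v - w‖ * b ⟪u, σ⟫ *
        (f (sV v (v - w) σ) * f (pV v (v - w) σ))) μ := by
      have : Measurable fun σ => Φ ‖v - w‖ * β ⟪u, σ⟫ *
          (f (sV v (v - w) σ) * f (pV v (v - w) σ)) := by
        have : Measurable fun σ : Rn N => β ⟪u, σ⟫ := by apply hβ.comp; fun_prop
        fun_prop
      exact this.aestronglyMeasurable.congr (Filter.EventuallyEq.symm hae)
    have hPH : ∫⁻ σ, ENNReal.ofReal (Φ ‖v - w‖ * b ⟪u, σ⟫ *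
        (f (sV v (v - w) σ) * f (pV v (v - w) σ))) ∂μ = H (v - w) := by
      refine lintegral_congr_ae ?_
      filter_upwards [hbb] with σ hσ
      have hc : ⟪σ, v - w⟫ / ‖v - w‖ = ⟪u, σ⟫ := hcos σ
      rw [hc, ← hσ, ENNReal.ofReal_mul (mul_nonneg (hΦ _).1 (hb0 _)), ENNReal.ofReal_mul (hΦ _).1,
        ENNReal.ofReal_mul (hf0 _)]
      ring
    have hP0 : 0 ≤ᵐ[μ] fun σ => Φ ‖v - w‖ * b ⟪u, σ⟫ *
        (f (sV v (v - w) σ) * f (pV v (v - w) σ)) := Filter.Eventually.of_forall fun σ =>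
      mul_nonneg (mul_nonneg (hΦ _).1 (hb0 _)) (mul_nonneg (hf0 _) (hf0 _))
    have hPi := (lintegral_ofReal_ne_top_iff_integrable mP hP0).1 (by rw [hPH]; exact hHw.ne)
    have hPe := integral_eq_lintegral_of_nonneg_ae hP0 mP
    rw [hPH] at hPe
    calc _ = ∫ σ : Rn N, (Φ ‖v - w‖ * b ⟪u, σ⟫ * (f (sV v (v - w) σ) * f (pV v (v - w) σ))
          - (Φ ‖v - w‖ * f w * f v) * b ⟪u, σ⟫) ∂μ := by
          refine integral_congr_ae (Filter.Eventually.of_forall fun σ => ?_)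
          simp only [hcos, vP_eq_pV, vSP_eq_sV]
          ring
      _ = _ := by
          rw [integral_sub hPi (i1.const_mul _), hPe, integral_const_mul, i2]
          ring
  rw [integral_congr_ae key]
  have iH : Integrable (fun w => (H (v - w)).toReal) :=
    integrable_toReal_of_lintegral_ne_top mHv.aemeasurable hg
  have iL : Integrable (fun w => Φ ‖v - w‖ * f w) := by
    refine hfi.bdd_mul (c := C) ?_ ?_
    · exact (hΦm.comp (by fun_prop)).aestronglyMeasurable
    · refine Filter.Eventually.of_forall fun w => ?_
      rw [Real.norm_of_nonneg (hΦ _).1]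
      exact (hΦ _).2
  rw [integral_sub iH (iL.const_mul _), integral_const_mul, integral_toReal mHv.aemeasurable hfinw]
  ring

end

/-- A solution of a scalar integral equation whose rate is dominated by `D` while it is above the
level `K` exceeds this level by at most the time integral of `D`. -/
lemma ode_excess {f Q : ℝ → ℝ} {f0 K : ℝ} (h : ∀ t, 0 ≤ t → f t = f0 + ∫ τ in Set.Ioc 0 t, Q τ)
    (h0 : f0 ≤ K) {D : ℝ → ℝ≥0∞} (hQ : ∀ τ, 0 ≤ τ → K ≤ f τ → ENNReal.ofReal (Q τ) ≤ D τ)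
    {t : ℝ} (ht : 0 ≤ t) : ENNReal.ofReal (f t - K) ≤ ∫⁻ τ in Set.Ioc 0 t, D τ := by
  rcases le_total (f t) K with hfK | hfK
  · rw [ENNReal.ofReal_of_nonpos (by linarith)]; exact zero_le
  -- a non-integrable rate has integral zero by convention, and then `f t = f0 ≤ K`
  by_cases hi : IntegrableOn Q (Set.Ioc 0 t)
  swap
  · have := h t ht
    rw [integral_undef hi] at this
    rw [ENNReal.ofReal_of_nonpos (by linarith)]; exact zero_le
  have hi' : IntegrableOn Q (Set.Icc 0 t) := (integrableOn_Icc_iff_integrableOn_Ioc).2 hi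
  have hcont : ContinuousOn f (Set.Icc 0 t) := by
    have c := intervalIntegral.continuousOn_primitive hi'
    refine (continuousOn_const.add c).congr fun s hs => h s hs.1
  set S : Set ℝ := Set.Icc 0 t ∩ f ⁻¹' Set.Iic K with hS
  have hSc : IsClosed S := hcont.preimage_isClosed_of_isClosed isClosed_Icc isClosed_Iic
  have hf0 : f 0 = f0 := by rw [h 0 le_rfl]; simp
  have hSn : S.Nonempty := ⟨0, ⟨le_rfl, ht⟩, by simp [hf0, h0]⟩
  have hSb : BddAbove S := ⟨t, fun s hs => hs.1.2⟩
  have hmem := hSc.csSup_mem hSn hSb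
  -- `s` is the last time at which `f` does not exceed `K`
  set s := sSup S with hs
  have habove : ∀ τ ∈ Set.Ioc s t, K ≤ f τ := by
    intro τ hτ
    by_contra hlt
    push Not at hlt
    have : τ ∈ S := ⟨⟨hmem.1.1.trans hτ.1.le, hτ.2⟩, hlt.le⟩
    exact absurd (le_csSup hSb this) (not_le.2 hτ.1)
  have hsub : Set.Ioc s t ⊆ Set.Ioc 0 t := Set.Ioc_subset_Ioc_left hmem.1.1
  have his := hi.mono_set hsub
  have hdiff : f t - f s = ∫ τ in Set.Ioc s t, Q τ := by
    rw [h t ht, h s hmem.1.1, ← Set.Ioc_union_Ioc_eq_Ioc hmem.1.1 hmem.1.2,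
      setIntegral_union (Set.Ioc_disjoint_Ioc_of_le le_rfl) measurableSet_Ioc
        (hi.mono_set (Set.Ioc_subset_Ioc_right hmem.1.2)) his]
    ring
  have hfs : f s ≤ K := hmem.2
  calc ENNReal.ofReal (f t - K) ≤ ENNReal.ofReal (∫ τ in Set.Ioc s t, Q τ) := by
        rw [← hdiff]; apply ENNReal.ofReal_le_ofReal; linarith
    _ ≤ ENNReal.ofReal (∫ τ in Set.Ioc s t, max (Q τ) 0) := by
        apply ENNReal.ofReal_le_ofReal
        exact integral_mono his his.pos_part fun τ => le_max_left _ _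
    _ = ∫⁻ τ in Set.Ioc s t, ENNReal.ofReal (max (Q τ) 0) :=
        ofReal_integral_eq_lintegral_ofReal his.pos_part
          (Filter.Eventually.of_forall fun τ => le_max_right _ _)
    _ ≤ ∫⁻ τ in Set.Ioc s t, D τ := by
        refine lintegral_mono_ae ?_
        filter_upwards [ae_restrict_mem measurableSet_Ioc] with τ hτ
        have := hQ τ (hmem.1.1.trans hτ.1.le) (habove τ hτ)
        rcases le_total (Q τ) 0 with h' | h'
        · simp [h']
        · rwa [max_eq_left h']
    _ ≤ _ := lintegral_mono_set hsub

/-- Grönwall's lemma for a bounded function with values in `[0,∞]`. -/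
lemma gronwall_zero {U : ℝ → ℝ≥0∞} {M C : ℝ} (hC : 0 < C) (hM : 0 ≤ M)
    (hU : ∀ t, 0 ≤ t → U t ≤ ENNReal.ofReal M)
    (h : ∀ t, 0 ≤ t → U t ≤ ENNReal.ofReal C * ∫⁻ τ in Set.Ioc 0 t, U τ) {t : ℝ} (ht : 0 ≤ t) :
    U t = 0 := by
  have key : ∀ n : ℕ, ∀ t, 0 ≤ t → U t ≤ ENNReal.ofReal (M * (1/2) ^ n * Real.exp (2 * C * t)) := by
    intro n
    induction n with
    | zero =>
      intro t ht
      refine (hU t ht).trans (ENNReal.ofReal_le_ofReal ?_)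
      have : 1 ≤ Real.exp (2 * C * t) := Real.one_le_exp (by positivity)
      nlinarith
    | succ n ih =>
      intro t ht
      have hint : IntegrableOn (fun τ => M * (1/2) ^ n * Real.exp (2 * C * τ)) (Set.Ioc 0 t) :=
        (Continuous.integrableOn_Icc (by fun_prop)).mono_set Set.Ioc_subset_Icc_self
      calc U t ≤ ENNReal.ofReal C * ∫⁻ τ in Set.Ioc 0 t, U τ := h t ht
        _ ≤ ENNReal.ofReal C * ∫⁻ τ in Set.Ioc 0 t,
              ENNReal.ofReal (M * (1/2) ^ n * Real.exp (2 * C * τ)) := by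
            gcongr ENNReal.ofReal C * ?_
            exact setLIntegral_mono (by fun_prop) fun τ hτ => ih τ hτ.1.le
        _ = ENNReal.ofReal (C * (M * (1/2) ^ n * ((Real.exp (2 * C * t) - 1) / (2 * C)))) := by
            rw [← ofReal_integral_eq_lintegral_ofReal hint
              (Filter.Eventually.of_forall fun τ => by positivity),
              ← ENNReal.ofReal_mul hC.le, integral_const_mul,
              ← intervalIntegral.integral_of_le ht,
              intervalIntegral.integral_comp_mul_left (fun x => Real.exp x) (by positivity),
              integral_exp]
            simp [div_eq_inv_mul]
        _ ≤ _ := by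
            apply ENNReal.ofReal_le_ofReal
            have e1 : C * (M * (1/2) ^ n * ((Real.exp (2 * C * t) - 1) / (2 * C)))
              = M * (1/2) ^ (n + 1) * (Real.exp (2 * C * t) - 1) := by
              field_simp
              ring
            rw [e1]
            gcongr
            linarith
  have lim : Filter.Tendsto (fun n : ℕ => ENNReal.ofReal (M * (1/2) ^ n * Real.exp (2 * C * t)))
      Filter.atTop (nhds 0) := by
    rw [← ENNReal.ofReal_zero]
    refine ENNReal.tendsto_ofReal ?_
    have := tendsto_pow_atTop_nhds_zero_of_lt_one (r := (1/2 : ℝ)) (by norm_num) (by norm_num)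
    simpa using (this.const_mul M).mul_const (Real.exp (2 * C * t))
  exact le_antisymm (ge_of_tendsto' lim fun n => key n t ht) zero_le

/-! ### Excess, loss rate and a priori bounds -/

lemma measurable_defect {N : ℕ} {μ : Measure (Rn N)} [SFinite μ] {β : ℝ → ℝ≥0∞} (hβ : Measurable β)
    (C q K : ℝ) {F : ℝ → Rn N → ℝ≥0∞} (hF : Measurable (Function.uncurry F)) :
    Measurable fun p : ℝ × Rn N => defect μ C β q K (F p.1) p.2 := by
  have hU : Measurable (Function.uncurry fun t => excess q K (F t)) := by
    unfold excess
    exact hF.sub (by fun_prop)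
  have mβ : Measurable fun p : ((ℝ × Rn N) × Rn N) × Rn N => β (⟪p.2, p.1.2⟫ / ‖p.1.2‖) := by
    apply hβ.comp; fun_prop
  have mg : ∀ A B : ℝ → Rn N → ℝ≥0∞, Measurable (Function.uncurry A) →
      Measurable (Function.uncurry B) →
      Measurable fun p : ℝ × Rn N => gainO μ (fun _ => 1) β (A p.1) (B p.1) p.2 := by
    intro A B hA hB
    have a1 : Measurable fun p : ((ℝ × Rn N) × Rn N) × Rn N =>
        A p.1.1.1 (pV p.1.1.2 p.1.2 p.2) :=
      hA.comp (f := fun p : ((ℝ × Rn N) × Rn N) × Rn N =>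
        (p.1.1.1, pV p.1.1.2 p.1.2 p.2)) (by fun_prop)
    have b1 : Measurable fun p : ((ℝ × Rn N) × Rn N) × Rn N =>
        B p.1.1.1 (sV p.1.1.2 p.1.2 p.2) :=
      hB.comp (f := fun p : ((ℝ × Rn N) × Rn N) × Rn N =>
        (p.1.1.1, sV p.1.1.2 p.1.2 p.2)) (by fun_prop)
    have m : Measurable fun p : ((ℝ × Rn N) × Rn N) × Rn N =>
      (1 : ℝ≥0∞) * (β (⟪p.2, p.1.2⟫ / ‖p.1.2‖) *
        (A p.1.1.1 (pV p.1.1.2 p.1.2 p.2) * B p.1.1.1 (sV p.1.1.2 p.1.2 p.2))) := by fun_prop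
    exact m.lintegral_prod_right'.lintegral_prod_right'
  unfold defect
  exact ((mg _ _ hU hF).add (mg _ _ hF hU)).const_mul _

/-- If the excess is produced only by the defect, then it vanishes identically: its `L¹` norm
vanishes by Grönwall's lemma, and the defect of an a.e. vanishing excess is zero everywhere. -/
lemma excess_eq_zero {N : ℕ} {μ : Measure (Rn N)} (hμ : AngMeas μ) {β : ℝ → ℝ≥0∞}
    (hβ : Measurable β) (e : Rn N) (he : ‖e‖ = 1) (hint : ∫⁻ s, β ⟪s, e⟫ ∂μ ≠ ⊤) (C q K : ℝ)
    {F : ℝ → Rn N → ℝ≥0∞} (hF : Measurable (Function.uncurry F)) {R : ℝ≥0∞} (hR : R ≠ ⊤)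
    (hFR : ∀ t, 0 ≤ t → ∫⁻ y, F t y ≤ R)
    (h : ∀ t, 0 ≤ t → ∀ v, excess q K (F t) v
      ≤ ∫⁻ τ in Set.Ioc 0 t, defect μ C β q K (F τ) v) {t : ℝ} (ht : 0 ≤ t) (v : Rn N) :
    excess q K (F t) v = 0 := by
  have := hμ.fin
  have hFt : ∀ t, Measurable (F t) := fun t => hF.of_uncurry_left
  have mD := measurable_defect (μ := μ) hβ C q K hF
  set X : ℝ≥0∞ := ENNReal.ofReal C * (2 * ((∫⁻ s, β ⟪s, e⟫ ∂μ) * R)) with hX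
  have hXt : X ≠ ⊤ := by rw [hX]; finiteness
  have hzero : ∀ t, 0 ≤ t → ∫⁻ y, excess q K (F t) y = 0 := by
    intro t ht
    refine gronwall_zero (U := fun t => ∫⁻ y, excess q K (F t) y) (M := R.toReal)
      (C := X.toReal + 1) (by positivity) (by positivity) ?_ ?_ ht
    · intro t ht
      rw [ENNReal.ofReal_toReal hR]
      exact (lintegral_mono fun y => tsub_le_self).trans (hFR t ht)
    · intro t ht
      calc ∫⁻ y, excess q K (F t) y
          ≤ ∫⁻ y, ∫⁻ τ in Set.Ioc 0 t, defect μ C β q K (F τ) y := lintegral_mono (h t ht)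
        _ = ∫⁻ τ in Set.Ioc 0 t, ∫⁻ y, defect μ C β q K (F τ) y := by
            refine lintegral_lintegral_swap ?_
            exact (mD.comp measurable_swap).aemeasurable
        _ ≤ ∫⁻ τ in Set.Ioc 0 t, X * ∫⁻ y, excess q K (F τ) y := by
            refine lintegral_mono_ae ?_
            filter_upwards [ae_restrict_mem measurableSet_Ioc] with τ hτ
            rw [lintegral_defect hμ hβ e he C q K (hFt τ)]
            have := hFR τ hτ.1.le
            calc _ ≤ ENNReal.ofReal C * (2 * ((∫⁻ s, β ⟪s, e⟫ ∂μ) *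
                    ((∫⁻ y, excess q K (F τ) y) * R))) := by gcongr
              _ = _ := by rw [hX]; ring
        _ = X * ∫⁻ τ in Set.Ioc 0 t, ∫⁻ y, excess q K (F τ) y := lintegral_const_mul' _ _ hXt
        _ ≤ _ := by
            gcongr
            conv_lhs => rw [← ENNReal.ofReal_toReal hXt]
            apply ENNReal.ofReal_le_ofReal
            linarith
  refine le_antisymm ((h t ht v).trans ?_) zero_le
  refine le_of_eq_of_le (setLIntegral_congr_fun (g := fun _ => 0) measurableSet_Ioc ?_) (by simp)
  intro τ hτ
  refine defect_eq_zero hμ hβ e he C q K (hFt τ) ?_ v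
  exact (lintegral_eq_zero_iff (measurable_excess q K (hFt τ))).1 (hzero τ hτ.1.le)

/-- Lower bound of the loss rate in terms of mass and second moment. -/
lemma loss_lower {N : ℕ} {Φ : ℝ → ℝ} (hΦc : Continuous Φ) {c C γ : ℝ} (hc : 0 < c)
    (hγ : γ ∈ Set.Ioc (-2 : ℝ) 0) (hlow : ∀ z : Rn N, c * wt γ z ≤ Φ ‖z‖)
    (hup : ∀ z : Rn N, Φ ‖z‖ ≤ C) {f : Rn N → ℝ} (hf0 : ∀ v, 0 ≤ f v)
    (hfi : Integrable f) (hfi2 : Integrable fun w => f w * wt 2 w) {K0 : ℝ} (hK0 : 0 < K0)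
    (hK : ∫ w, f w * wt 2 w ≤ K0) (v : Rn N) :
    c * ((∫ w, f w) ^ 2 / K0) * wt γ v ≤ ∫ w, Φ ‖v - w‖ * f w := by
  set ρ := ∫ w, f w with hρ
  -- optimal parameter in `x⁻¹ ≥ 2 a - a² x` for mass `ρ` and second moment at most `K0`
  set a := ρ / K0 with ha
  have iL : Integrable (fun w => Φ ‖v - w‖ * f w) := by
    refine hfi.bdd_mul (c := C) ?_ ?_
    · exact (hΦc.comp (by fun_prop)).aestronglyMeasurable
    · refine Filter.Eventually.of_forall fun w => ?_
      rw [Real.norm_of_nonneg]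
      · exact hup _
      · exact (mul_pos hc (wt_pos _ _)).le.trans (hlow _)
  have hv := wt_pos γ v
  calc c * (ρ ^ 2 / K0) * wt γ v = c * wt γ v * (2 * a * ρ - a ^ 2 * K0) := by
        rw [ha]; field_simp; ring
    _ ≤ c * wt γ v * (2 * a * ρ - a ^ 2 * ∫ w, f w * wt 2 w) := by gcongr
    _ = ∫ w, c * wt γ v * (2 * a * f w - a ^ 2 * (f w * wt 2 w)) := by
        rw [integral_const_mul, integral_sub (hfi.const_mul _) (hfi2.const_mul _),
          integral_const_mul, integral_const_mul]
    _ ≤ ∫ w, Φ ‖v - w‖ * f w := by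
        refine integral_mono (((hfi.const_mul _).sub (hfi2.const_mul _)).const_mul _) iL ?_
        intro w
        have p1 : wt γ v ≤ wt γ (v - w) * wt (-γ) w := by
          have h1 : ‖v - w‖ ≤ ‖v‖ + ‖w‖ := norm_sub_le _ _
          have := wt_peetre h1 (a := -γ) (by linarith [hγ.2])
          rwa [neg_neg] at this
        have p2 : wt (-γ) w ≤ wt 2 w := wt_mono (by linarith [hγ.1]) _
        have hw := wt_pos 2 w
        have hz := wt_pos γ (v - w)
        have p3 : wt γ v ≤ wt γ (v - w) * wt 2 w := p1.trans (by gcongr)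
        -- `x⁻¹ ≥ 2 a - a² x` for `x = (1+|w|)²`
        have p4 : wt γ v * (2 * a - a ^ 2 * wt 2 w) ≤ wt γ (v - w) := by
          have : (2 * a - a ^ 2 * wt 2 w) * wt 2 w ≤ 1 := by nlinarith [sq_nonneg (a * wt 2 w - 1)]
          rcases le_total (2 * a - a ^ 2 * wt 2 w) 0 with h0 | h0
          · exact (mul_nonpos_of_nonneg_of_nonpos hv.le h0).trans hz.le
          · calc _ ≤ (wt γ (v - w) * wt 2 w) * (2 * a - a ^ 2 * wt 2 w) := by gcongr
              _ = wt γ (v - w) * ((2 * a - a ^ 2 * wt 2 w) * wt 2 w) := by ring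
              _ ≤ _ := mul_le_of_le_one_right hz.le this
        calc c * wt γ v * (2 * a * f w - a ^ 2 * (f w * wt 2 w))
            = c * (wt γ v * (2 * a - a ^ 2 * wt 2 w)) * f w := by ring
          _ ≤ c * wt γ (v - w) * f w := by
              have := hf0 w
              gcongr
          _ ≤ _ := by
              exact mul_le_mul_of_nonneg_right (hlow (v - w)) (hf0 w)

lemma lintegral_wt_le {N : ℕ} {s : ℝ} (hs : 0 ≤ s) {f : Rn N → ℝ} (hf0 : ∀ v, 0 ≤ f v) {A : ℝ}
    (h : L1s N s f ≤ ENNReal.ofReal A) :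
    ∫⁻ y, ENNReal.ofReal (f y) * ENNReal.ofReal (wt s y)
      ≤ ENNReal.ofReal (2 ^ (s / 2)) * ENNReal.ofReal A := by
  refine le_trans ?_ (mul_le_mul' le_rfl h)
  unfold L1s
  rw [← lintegral_const_mul' _ _ ENNReal.ofReal_ne_top]
  refine lintegral_mono fun y => ?_
  rw [← ENNReal.ofReal_mul (hf0 y), ← ENNReal.ofReal_mul (by positivity), abs_of_nonneg (hf0 y)]
  apply ENNReal.ofReal_le_ofReal
  have h1 : wt s y ≤ 2 ^ (s / 2) * (1 + ‖y‖ ^ 2) ^ (s / 2) := by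
    rw [← Real.mul_rpow (by norm_num) (by positivity)]
    have e1 : wt s y = ((1 + ‖y‖) ^ 2) ^ (s / 2) := by
      unfold wt
      rw [← Real.rpow_natCast, ← Real.rpow_mul (by positivity)]
      congr 1; push_cast; ring
    rw [e1]
    refine Real.rpow_le_rpow (by positivity) ?_ (by positivity)
    nlinarith [sq_nonneg (1 - ‖y‖)]
  calc f y * wt s y ≤ f y * (2 ^ (s / 2) * (1 + ‖y‖ ^ 2) ^ (s / 2)) :=
        mul_le_mul_of_nonneg_left h1 (hf0 y)
    _ = _ := by ring

lemma lintegral_sq_le {N : ℕ} {f : Rn N → ℝ} (hf0 : ∀ v, 0 ≤ f v) {A : ℝ}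
    (h : HkNorm N 0 f ≤ ENNReal.ofReal A) :
    ∫⁻ y, ENNReal.ofReal (f y) ^ 2 ≤ ENNReal.ofReal A ^ 2 := by
  have h0 : (0 : Fin N → ℕ) ∈ multiIdx N 0 := by simp [multiIdx]; rfl
  have hm : mderiv N 0 f = f := by
    have : ∀ l : List (Fin N), l.foldr (fun i g => (pderiv N i)^[(0 : Fin N → ℕ) i] g) f = f := by
      intro l; induction l with
      | nil => rfl
      | cons a l ih =>
        rw [List.foldr_cons, ih]
        rfl
    exact this _
  have h1 : ∫⁻ y, ENNReal.ofReal (f y) ^ 2 ≤ HkNormSq N 0 f := by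
    unfold HkNormSq
    refine le_trans (le_of_eq ?_) (Finset.single_le_sum
      (f := fun m => ∫⁻ v : Rn N, ENNReal.ofReal (|mderiv N m f v| ^ 2)) (fun _ _ => zero_le) h0)
    refine lintegral_congr fun y => ?_
    rw [hm, sq_abs, ENNReal.ofReal_pow (hf0 y)]
  refine h1.trans ?_
  have h2 : HkNormSq N 0 f = HkNorm N 0 f ^ 2 := by
    unfold HkNorm
    rw [← ENNReal.rpow_natCast, ← ENNReal.rpow_mul]
    simp
  rw [h2]
  gcongr

lemma schwartz_decay {N : ℕ} (q : ℝ) (g : SchwartzMap (Rn N) ℝ) :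
    ∃ C : ℝ, ∀ v, g v ≤ C * wt (-q) v := by
  obtain ⟨k, hk⟩ := exists_nat_ge q
  have hd := SchwartzMap.one_add_le_sup_seminorm_apply (𝕜 := ℝ) (m := (k, 0)) (k := k) (n := 0)
    le_rfl le_rfl g
  refine ⟨2 ^ k * ((Finset.Iic (k, 0)).sup fun m => SchwartzMap.seminorm ℝ m.1 m.2) g,
    fun v => ?_⟩
  have h := hd v
  rw [norm_iteratedFDeriv_zero] at h
  have hw : 0 < wt q v := wt_pos q v
  have h1 : wt q v * wt (-q) v = 1 := by rw [← wt_add]; simp [wt]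
  have h2 : wt q v ≤ (1 + ‖v‖) ^ k := by
    have := wt_mono hk v
    simpa [wt] using this
  calc g v = (wt q v * g v) * wt (-q) v := by rw [mul_right_comm, h1, one_mul]
    _ ≤ ((1 + ‖v‖) ^ k * ‖g v‖) * wt (-q) v := by
        have := wt_pos (-q) v
        have := le_abs_self (g v)
        rw [Real.norm_eq_abs]
        gcongr ?_ * wt (-q) v
        calc wt q v * g v ≤ wt q v * |g v| := by gcongr
          _ ≤ _ := by gcongr
    _ ≤ _ := by
        have := wt_pos (-q) v
        gcongr

lemma sphMeas_angMeas {N : ℕ} (hN : 2 ≤ N) {b : ℝ → ℝ} {b₀ : ℝ} (hb₀ : 0 < b₀)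
    (hb : ∀ x, b₀ ≤ b x) {e : Rn N} (hi : Integrable (fun σ : Rn N => b ⟪e, σ⟫) (sphMeas N)) :
    AngMeas (sphMeas N) := by
  refine ⟨?_, sphMeas_measurePreserving N, sphMeas_norm N, sphMeas_ne N hN⟩
  have h : Integrable (fun _ : Rn N => b₀) (sphMeas N) := by
    refine hi.mono aestronglyMeasurable_const (Filter.Eventually.of_forall fun σ => ?_)
    rw [Real.norm_of_nonneg hb₀.le]
    exact (hb _).trans (le_abs_self _)
  rcases integrable_const_iff.1 h with h | h
  · exact absurd h hb₀.ne'
  · exact h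

/-! ### The barrier argument -/

lemma gainO_mono_kernel {N : ℕ} {μ : Measure (Rn N)} {k l : Rn N → ℝ≥0∞} (h : ∀ z, k z ≤ l z)
    (β : ℝ → ℝ≥0∞) (A B : Rn N → ℝ≥0∞) (v : Rn N) : gainO μ k β A B v ≤ gainO μ l β A B v :=
  lintegral_mono fun z => lintegral_mono fun _ => mul_le_mul' (h z) le_rfl

lemma gainO_eq_zero {N : ℕ} {μ : Measure (Rn N)} (hμ : AngMeas μ) {k : Rn N → ℝ≥0∞} {C : ℝ}
    (hk : ∀ z, k z ≤ ENNReal.ofReal C) {β : ℝ → ℝ≥0∞} (hβ : Measurable β) {e : Rn N}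
    (he : ‖e‖ = 1) {A : Rn N → ℝ≥0∞} (hA : Measurable A) (h0 : A =ᵐ[volume] 0)
    (B : Rn N → ℝ≥0∞) (v : Rn N) : gainO μ k β A B v = 0 := by
  refine le_antisymm ((gainO_mono_kernel hk β A B v).trans ?_) zero_le
  unfold gainO
  simp only [lintegral_const_mul' _ _ ENNReal.ofReal_ne_top]
  rw [gain_eq_zero_left hμ hβ hA e he h0 v, mul_zero]

/-- Where `f` lies above the barrier `κ² (1+|v|)^{-q}`, the loss term absorbs the part
`ν κ² (1+|v|)^{γ-q}` of the gain term, so that only the defect remains. -/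
lemma collision_le_defect {N : ℕ} {μ : Measure (Rn N)} {C γ q ν K fv L : ℝ} {k : Rn N → ℝ≥0∞}
    {β βs : ℝ → ℝ≥0∞} {F : Rn N → ℝ≥0∞} {v : Rn N} {Q : ℝ} (hν : 0 < ν) (hK : 0 < K)
    (hf : 0 ≤ fv) (hL : 0 ≤ L)
    (hgain : gainO μ k β F F v ≤ ENNReal.ofReal (ν * K * wt (γ - q) v) + defect μ C βs q K F v)
    (hQ : gainO μ k β F F v ≠ ⊤ → Q = (gainO μ k β F F v).toReal - fv * L)
    (hloss : gainO μ k β F F v = 0 ∨ ν * wt γ v ≤ L) (hfK : K * wt (-q) v ≤ fv) :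
    ENNReal.ofReal Q ≤ defect μ C βs q K F v := by
  by_cases hD : defect μ C βs q K F v = ⊤
  · rw [hD]; exact le_top
  have hG : gainO μ k β F F v ≠ ⊤ := ne_top_of_le_ne_top (by finiteness) hgain
  rw [hQ hG]
  rcases hloss with h0 | hl
  · rw [h0, ENNReal.toReal_zero, ENNReal.ofReal_of_nonpos (by nlinarith [mul_nonneg hf hL])]
    exact zero_le
  · rw [← ENNReal.ofReal_toReal hD]
    apply ENNReal.ofReal_le_ofReal
    have w1 := wt_pos γ v
    have w2 := wt_pos (-q) v
    have w3 := wt_pos (γ - q) v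
    have h1 : (gainO μ k β F F v).toReal
        ≤ ν * K * wt (γ - q) v + (defect μ C βs q K F v).toReal := by
      have := ENNReal.toReal_mono (by finiteness) hgain
      rwa [ENNReal.toReal_add (by finiteness) hD, ENNReal.toReal_ofReal (by positivity)] at this
    have h2 : ν * K * wt (γ - q) v ≤ fv * L := by
      rw [sub_eq_add_neg, wt_add]
      calc ν * K * (wt γ v * wt (-q) v) = (K * wt (-q) v) * (ν * wt γ v) := by ring
        _ ≤ fv * L := by gcongr
    linarith

/-- Coercivity of the collision frequency, uniform in time; if the angular measure or the mass
vanishes, the gain term is zero instead. -/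
lemma loss_alternative {N : ℕ} {μ : Measure (Rn N)} (hμ : AngMeas μ) {Φ b : ℝ → ℝ}
    (hΦc : Continuous Φ) {c C γ : ℝ} (hc : 0 < c) (hγ : γ ∈ Set.Ioc (-2 : ℝ) 0)
    (hlow : ∀ z : Rn N, c * wt γ z ≤ Φ ‖z‖) (hup : ∀ z : Rn N, Φ ‖z‖ ≤ C) {b₀ : ℝ} (hb₀ : 0 < b₀)
    (hb : ∀ x, b₀ ≤ b x) {e : Rn N} (he : ‖e‖ = 1)
    (hi : Integrable (fun σ : Rn N => b ⟪e, σ⟫) μ) {β : ℝ → ℝ≥0∞} (hβ : Measurable β)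
    {f : ℝ → Rn N → ℝ} (hf0 : ∀ t v, 0 ≤ f t v) (hfm : ∀ t, Measurable (f t)) {ρ K0 : ℝ}
    (hfi : ∀ t, 0 ≤ t → Integrable (f t)) (hρ : ∀ t, 0 ≤ t → ∫ v, f t v = ρ)
    (hfi2 : ∀ t, 0 ≤ t → Integrable fun w => f t w * wt 2 w) (hK0 : 0 < K0)
    (hK : ∀ t, 0 ≤ t → ∫ w, f t w * wt 2 w ≤ K0) :
    ∃ ν : ℝ, 0 < ν ∧ ∀ t, 0 ≤ t → ∀ v,
      gainO μ (fun z => ENNReal.ofReal (Φ ‖z‖)) β (fun y => ENNReal.ofReal (f t y))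
        (fun y => ENNReal.ofReal (f t y)) v = 0
      ∨ ν * wt γ v ≤ (∫ σ, b ⟪e, σ⟫ ∂μ) * ∫ w, Φ ‖v - w‖ * f t w := by
  have := hμ.fin
  by_cases hμ0 : μ = 0
  · exact ⟨1, one_pos, fun t _ v => Or.inl (by simp [gainO, hμ0])⟩
  by_cases hρ0 : ρ = 0
  · refine ⟨1, one_pos, fun t ht v => Or.inl ?_⟩
    refine gainO_eq_zero hμ (fun z => ENNReal.ofReal_le_ofReal (hup z)) hβ he
      (hfm t).ennreal_ofReal ?_ _ v
    have h := (integral_eq_zero_iff_of_nonneg (hf0 t) (hfi t ht)).1 ((hρ t ht).trans hρ0)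
    filter_upwards [h] with y hy
    simp [hy]
  have hB : 0 < ∫ σ, b ⟪e, σ⟫ ∂μ := by
    have h1 : ∫ _σ, b₀ ∂μ ≤ ∫ σ, b ⟪e, σ⟫ ∂μ :=
      integral_mono (integrable_const _) hi fun σ => hb _
    rw [integral_const, smul_eq_mul] at h1
    have h2 : 0 < μ.real Set.univ := by
      have : NeZero μ := ⟨hμ0⟩
      exact measureReal_univ_pos
    exact (mul_pos h2 hb₀).trans_le h1
  have hρ2 : 0 < ρ ^ 2 := by positivity
  refine ⟨(∫ σ, b ⟪e, σ⟫ ∂μ) * (c * (ρ ^ 2 / K0)), by positivity, fun t ht v => Or.inr ?_⟩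
  have h := loss_lower hΦc hc hγ hlow hup (hf0 t) (hfi t ht) (hfi2 t ht) hK0 (hK t ht) v
  rw [hρ t ht] at h
  rw [mul_assoc]
  gcongr

lemma integrable_of_lintegral_le {N : ℕ} {f : Rn N → ℝ} (hf0 : ∀ v, 0 ≤ f v) (hf : Measurable f)
    {a s : ℝ} (has : a ≤ s) {A1 : ℝ≥0∞} (hA1 : A1 ≠ ⊤)
    (h : ∫⁻ y, ENNReal.ofReal (f y) * ENNReal.ofReal (wt s y) ≤ A1) :
    Integrable (fun y => f y * wt a y) ∧ ∫ y, f y * wt a y ≤ A1.toReal := by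
  have hm : Measurable fun y => f y * wt a y := hf.mul (measurable_wt a measurable_id)
  have hn : ∀ y, 0 ≤ f y * wt a y := fun y => mul_nonneg (hf0 y) (wt_pos a y).le
  have hl : ∫⁻ y, ENNReal.ofReal (f y * wt a y) ≤ A1 := by
    refine le_trans (lintegral_mono fun y => ?_) h
    rw [← ENNReal.ofReal_mul (hf0 y)]
    exact ENNReal.ofReal_le_ofReal (mul_le_mul_of_nonneg_left (wt_mono has y) (hf0 y))
  refine ⟨⟨hm.aestronglyMeasurable, ?_⟩, ?_⟩
  · rw [hasFiniteIntegral_iff_ofReal (Filter.Eventually.of_forall hn)]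
    exact hl.trans_lt hA1.lt_top
  · rw [integral_eq_lintegral_of_nonneg_ae (Filter.Eventually.of_forall hn) hm.aestronglyMeasurable]
    exact ENNReal.toReal_mono hA1 hl

/-- The decay estimate for an abstract rotation-invariant angular measure. -/
lemma barrier_decay {N : ℕ} {μ : Measure (Rn N)} (hμ : AngMeas μ) {Φ b : ℝ → ℝ}
    (hΦc : Continuous Φ) {c C γ q : ℝ} (hc : 0 < c) (hC : 0 ≤ C) (hγ : γ ∈ Set.Ioc (-2 : ℝ) 0)
    (hq : 0 < q) (hlow : ∀ z : Rn N, c * wt γ z ≤ Φ ‖z‖) (hup : ∀ z : Rn N, Φ ‖z‖ ≤ C * wt γ z)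
    {b₀ : ℝ} (hb₀ : 0 < b₀) (hb : ∀ x, b₀ ≤ b x) {e : Rn N} (he : ‖e‖ = 1)
    (hi : Integrable (fun σ : Rn N => b ⟪e, σ⟫) μ)
    {f : ℝ → Rn N → ℝ} {fIn : Rn N → ℝ} (hf0 : ∀ t v, 0 ≤ f t v)
    (hfm : Measurable (Function.uncurry f)) {ρ C0 : ℝ} (hρ : ∀ t, 0 ≤ t → ∫ v, f t v = ρ)
    (hC0 : ∀ v, fIn v ≤ C0 * wt (-q) v)
    (heqn : ∀ t, 0 ≤ t → ∀ v, f t v = fIn v + ∫ τ in Set.Ioc 0 t,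
      ∫ w : Rn N, ∫ σ : Rn N, Φ ‖v - w‖ * b (cosTheta N v w σ) *
        (f τ (vSP N v w σ) * f τ (vP N v w σ) - f τ w * f τ v) ∂μ)
    {A1 A2 : ℝ≥0∞} (hA1 : A1 ≠ ⊤) (hA2 : A2 ≠ ⊤)
    (h1 : ∀ t, 0 ≤ t →
      ∫⁻ y, ENNReal.ofReal (f t y) * ENNReal.ofReal (wt (4 * (q + 2)) y) ≤ A1)
    (h2 : ∀ t, 0 ≤ t → ∫⁻ y, ENNReal.ofReal (f t y) ^ 2 ≤ A2) :
    ∃ K : ℝ, 0 < K ∧ ∀ t, 0 ≤ t → ∀ v, f t v ≤ K * wt (-q) v := by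
  have := hμ.fin
  have hft : ∀ t, Measurable (f t) := fun t => hfm.of_uncurry_left
  have hwt1 : ∀ z : Rn N, wt γ z ≤ 1 := fun z => by
    have := wt_mono hγ.2 z
    simpa [wt] using this
  have hΦ : ∀ z : Rn N, 0 ≤ Φ ‖z‖ ∧ Φ ‖z‖ ≤ C := fun z =>
    ⟨(mul_pos hc (wt_pos γ z)).le.trans (hlow z),
      (hup z).trans (mul_le_of_le_one_right hC (hwt1 z))⟩
  obtain ⟨β', hβ', hbβ⟩ := exists_borel_kernel μ hμ.inv e he hi.aemeasurable
  set β : ℝ → ℝ≥0∞ := fun x => ENNReal.ofReal (β' x) with hβdef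
  have hβ : Measurable β := hβ'.ennreal_ofReal
  have hint : ∫⁻ s, β ⟪s, e⟫ ∂μ ≠ ⊤ := by
    have h3 : ∫⁻ s, β ⟪s, e⟫ ∂μ = ∫⁻ s, ENNReal.ofReal (b ⟪e, s⟫) ∂μ := by
      refine lintegral_congr_ae ?_
      filter_upwards [hbβ e he] with s hs
      simp only [hβdef]
      rw [hs, real_inner_comm]
    rw [h3]
    exact hi.lintegral_lt_top.ne
  have hf1 : ∀ t, 0 ≤ t → Integrable (f t) := fun t ht => by
    have h := (integrable_of_lintegral_le (hf0 t) (hft t) (a := 0) (by positivity) hA1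
      (h1 t ht)).1
    simpa [wt] using h
  have hf2 := fun t ht => integrable_of_lintegral_le (hf0 t) (hft t) (a := 2) (by linarith) hA1
    (h1 t ht)
  have hR : ∀ t, 0 ≤ t → ∫⁻ y, ENNReal.ofReal (f t y) ≤ A1 := fun t ht => by
    refine (lintegral_mono fun y => ?_).trans (h1 t ht)
    refine le_mul_of_one_le_right' ?_
    rw [ENNReal.one_le_ofReal]
    have := wt_mono (a := 0) (b := 4 * (q + 2)) (by positivity) y
    simpa [wt] using this
  obtain ⟨ν, hν, hloss⟩ := loss_alternative hμ hΦc hc hγ hlow (fun z => (hΦ z).2) hb₀ hb he hi hβ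
    hf0 hft hf1 hρ (fun t ht => (hf2 t ht).1) (K0 := A1.toReal + 1) (by positivity)
    (fun t ht => ((hf2 t ht).2).trans (by linarith))
  obtain ⟨κ₀, hκ₀, hgain⟩ := gain_bound hμ hβ e he hC hγ hq hν (fun x => ENNReal.ofReal_ne_top)
    hint hA1 hA2
  set κ := max κ₀ (max C0 1) with hκ
  have hκ1 : 1 ≤ κ := (le_max_right _ _).trans (le_max_right _ _)
  have hκC : C0 ≤ κ ^ 2 := by
    have : C0 ≤ κ := (le_max_left _ _).trans (le_max_right _ _)
    nlinarith
  have hκ2 : 0 < κ ^ 2 := by positivity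
  refine ⟨κ ^ 2, hκ2, fun t ht v => ?_⟩
  have hexc : ∀ t v, excess q (κ ^ 2) (fun y => ENNReal.ofReal (f t y)) v
      = ENNReal.ofReal (f t v - κ ^ 2 * wt (-q) v) := fun t v =>
    (ENNReal.ofReal_sub _ (mul_pos hκ2 (wt_pos _ _)).le).symm
  have hS : ∫⁻ s, symK β ⟪s, e⟫ ∂μ ≠ ⊤ :=
    ne_top_of_le_ne_top (by finiteness) (symK_lintegral hμ hβ e)
  have hzero := excess_eq_zero hμ (measurable_symK hβ) e he hS C q (κ ^ 2)
    (F := fun t y => ENNReal.ofReal (f t y)) hfm.ennreal_ofReal hA1 hR (fun t ht v => ?_) ht v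
  · rw [hexc, ENNReal.ofReal_eq_zero] at hzero
    linarith
  · rw [hexc]
    refine ode_excess (fun t ht => heqn t ht v) ((hC0 v).trans ?_) (fun τ hτ hfK => ?_) ht
    · exact mul_le_mul_of_nonneg_right hκC (wt_pos _ _).le
    · refine collision_le_defect hν hκ2 (hf0 τ v) ?_ ?_
        (fun hg => collision_eq hμ hΦc hΦ (fun x => hb₀.le.trans (hb x)) hβ' hbβ he hi (hf0 τ)
          (hft τ) (hf1 τ hτ) v hg) (hloss τ hτ v) hfK
      · exact mul_nonneg (integral_nonneg fun σ => hb₀.le.trans (hb _))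
          (integral_nonneg fun w => mul_nonneg (hΦ _).1 (hf0 τ w))
      · refine (gainO_mono_kernel (fun z => ?_) _ _ _ v).trans
          (hgain κ (le_max_left _ _) _ (hft τ).ennreal_ofReal (fun y => ENNReal.ofReal_ne_top)
            (h1 τ hτ) (h2 τ hτ) v)
        exact ENNReal.ofReal_le_ofReal (hup z)

/-- **Uniform pointwise decay (Remark 4)**: for any `q > 0` there are `s > 0` and `k ∈ ℕ`
(depending only on `N` and `q`) such that, for any solution with Schwartz-class nonnegative
initial datum whose `L¹_s` and `H^k` norms are bounded uniformly in time, one has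
`f(t,v) ≤ C (1+|v|)^{-q}` for all `t ≥ 0` and `v ∈ ℝ^N`. -/
theorem uniform_pointwise_decay
    (N : ℕ) (hN : 2 ≤ N) (q : ℝ) (hq : 0 < q) :
    ∃ (s : ℝ) (k : ℕ), 0 < s ∧
      ∀ (Φ b : ℝ → ℝ) (γ : ℝ), KernelOK N Φ b γ →
        ∀ (fIn : SchwartzMap (Rn N) ℝ) (f : ℝ → Rn N → ℝ),
          (∀ v, 0 ≤ fIn v) → IsSolution N Φ b f (⇑fIn) →
          (∃ A : ℝ, ∀ t : ℝ, 0 ≤ t → L1s N s (f t) ≤ ENNReal.ofReal A) →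
          (∃ A : ℝ, ∀ t : ℝ, 0 ≤ t → HkNorm N k (f t) ≤ ENNReal.ofReal A) →
          ∃ C : ℝ, 0 < C ∧
            ∀ t : ℝ, 0 ≤ t → ∀ v : Rn N, f t v ≤ C * (1 + ‖v‖) ^ (-q) := by
  refine ⟨4 * (q + 2), 0, by positivity, ?_⟩
  intro Φ b γ hK fIn f _ hf ⟨A, hA⟩ ⟨A', hA'⟩
  obtain ⟨c, C, hc, hC, hΦ⟩ := hK.phi_bounds
  obtain ⟨b₀, hb₀, hb⟩ := hK.b_pos
  have he : ‖(EuclideanSpace.single (⟨0, by omega⟩ : Fin N) (1 : ℝ) : Rn N)‖ = 1 := by simp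
  have hi := hK.b_integrable _ he
  obtain ⟨C0, hC0⟩ := schwartz_decay q fIn
  exact barrier_decay (sphMeas_angMeas hN hb₀ hb hi) hK.phi_smooth.continuous hc hC.le
    hK.gamma_mem hq (fun z => (hΦ z).1) (fun z => (hΦ z).2) hb₀ hb he hi hf.nonneg hf.meas
    hf.mass hC0 hf.eqn (by finiteness) (by finiteness)
    (fun t ht => lintegral_wt_le (by positivity) (hf.nonneg t) (hA t ht))
    (fun t ht => lintegral_sq_le (hf.nonneg t) (hA' t ht))
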